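/- arXiv:2506.19745 — 6 statements merged into one kernel-verified Lean document; each statement's English description precedes it below -/
import Mathlib

section
/- Let G be a finite group and H a subgroup of G. Let x_1, ..., x_k be a complete set of representatives of the conjugacy classes of G consisting of elements of prime order. If the sum over i = 1, ..., k of |x_i^G| * (|x_i^G ∩ H| / |x_i^G|)^2 is strictly less than 1 (as a real number), then there exists g ∈ G such that H ∩ gHg⁻¹ is the trivial subgroup. -/
/-- The elements conjugating `a` to `b`, for conjugate `a` and `b`, form a coset of a centralizer,
so the orbit-stabilizer theorem counts them. -/
theorem card_conjClass_mul_card_conjugators {G : Type*} [Group G] [Fintype G] [DecidableEq G]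
    [DecidableRel (IsConj : G → G → Prop)] {x a b : G} (ha : IsConj x a) (hb : IsConj x b) :
    (Finset.univ.filter fun y : G => IsConj x y).card *
      (Finset.univ.filter fun g : G => g * a * g⁻¹ = b).card = Fintype.card G := by
  have hfib := Finset.card_eq_sum_card_fiberwise (f := fun g : G => g * a * g⁻¹)
    (s := Finset.univ) (t := Finset.univ.filter fun y : G => IsConj x y)
    (fun g _ => by
      simpa using ha.trans (isConj_iff.2 ⟨g, rfl⟩))
  rw [← Finset.card_univ, hfib, ← smul_eq_mul, ← Finset.sum_const]
  refine Finset.sum_congr rfl fun y hy => ?_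
  obtain ⟨c, rfl⟩ := isConj_iff.1 (hb.symm.trans (Finset.mem_filter.1 hy).2)
  refine Finset.card_equiv (Equiv.mulLeft c) fun g => ?_
  simp only [Equiv.coe_mulLeft, Finset.mem_filter, Finset.mem_univ, true_and]
  rw [← mul_right_inj c, ← mul_left_inj c⁻¹]
  simp only [mul_inv_rev, mul_assoc]

/-- A nontrivial finite subgroup contains an element of prime order. -/
theorem Subgroup.exists_mem_prime_orderOf {G : Type*} [Group G] [Finite G] {K : Subgroup G}
    (hK : K ≠ ⊥) : ∃ h ∈ K, (orderOf h).Prime := by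
  have hcard : Nat.card K ≠ 1 := fun h => hK (Subgroup.card_eq_one.1 h)
  obtain ⟨p, hp, hdvd⟩ := Nat.exists_prime_and_dvd hcard
  have := Fact.mk hp
  obtain ⟨h, hh⟩ := exists_prime_orderOf_dvd_card' p hdvd
  exact ⟨h, h.2, by rwa [Subgroup.orderOf_coe, hh]⟩


/-- If `x 0, ..., x (k-1)` is a complete set of representatives of the conjugacy
classes of the finite group `G` consisting of elements of prime order, and
`∑ i, |x_i^G| * (|x_i^G ∩ H| / |x_i^G|)^2 < 1`, then some conjugate of `H`
intersects `H` trivially. -/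
theorem stmt0 {G : Type*} [Group G] [Finite G] (H : Subgroup G) (k : ℕ) (x : Fin k → G)
    (hord : ∀ i, (orderOf (x i)).Prime)
    (hdist : ∀ i j, IsConj (x i) (x j) → i = j)
    (hcomplete : ∀ g : G, (orderOf g).Prime → ∃ i, IsConj (x i) g)
    (hsum : ∑ i : Fin k, (Nat.card {y : G // IsConj (x i) y} : ℝ) *
        ((Nat.card {y : G // IsConj (x i) y ∧ y ∈ H} : ℝ) /
          (Nat.card {y : G // IsConj (x i) y} : ℝ)) ^ 2 < 1) :
    ∃ g : G, H ⊓ H.map (MulAut.conj g).toMonoidHom = ⊥ := by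
  classical
  have := Fintype.ofFinite G
  by_contra! hno
  simp only [Nat.card_eq_fintype_card, Fintype.card_subtype] at hsum
  set C : Fin k → Finset G := fun i => Finset.univ.filter fun y => IsConj (x i) y with hC
  set A : Fin k → Finset G := fun i => Finset.univ.filter fun y => IsConj (x i) y ∧ y ∈ H with hA
  set F : G × G → Finset G := fun p => Finset.univ.filter fun g => g * p.1 * g⁻¹ = p.2 with hF
  have hcover : (Finset.univ : Finset G) ⊆
      Finset.univ.biUnion fun i => (A i ×ˢ A i).biUnion F := by
    intro g _
    obtain ⟨h, hmem, hp⟩ := Subgroup.exists_mem_prime_orderOf (hno g)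
    obtain ⟨hH, a, haH, rfl⟩ := hmem
    obtain ⟨i, hi⟩ := hcomplete _ hp
    have hconj : IsConj a (g * a * g⁻¹) := isConj_iff.2 ⟨g, rfl⟩
    simp only [Finset.mem_biUnion, Finset.mem_univ, true_and]
    refine ⟨i, (a, g * a * g⁻¹), ?_, by simp [hF]⟩
    simp only [hA, Finset.mem_product, Finset.mem_filter, Finset.mem_univ, true_and]
    exact ⟨⟨hi.trans hconj.symm, haH⟩, hi, hH⟩
  have hle : Fintype.card G ≤ ∑ i, ∑ p ∈ A i ×ˢ A i, (F p).card :=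
    (Finset.card_le_card hcover).trans <| Finset.card_biUnion_le.trans <|
      Finset.sum_le_sum fun i _ => Finset.card_biUnion_le
  have hG : (0 : ℝ) < Fintype.card G := by exact_mod_cast Fintype.card_pos
  have hterm : ∀ i, ((∑ p ∈ A i ×ˢ A i, (F p).card : ℕ) : ℝ) =
      Fintype.card G * ((C i).card * ((A i).card / (C i).card : ℝ) ^ 2) := by
    intro i
    have hpos : (0 : ℝ) < (C i).card := by
      exact_mod_cast Finset.card_pos.2 ⟨x i, Finset.mem_filter.2 ⟨Finset.mem_univ _, IsConj.refl _⟩⟩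
    have hcount : ∀ p ∈ A i ×ˢ A i, ((F p).card : ℝ) = Fintype.card G / (C i).card := by
      intro p hp
      simp only [hA, Finset.mem_product, Finset.mem_filter, Finset.mem_univ, true_and] at hp
      rw [eq_div_iff hpos.ne', mul_comm]
      exact_mod_cast card_conjClass_mul_card_conjugators hp.1.1 hp.2.1
    rw [Nat.cast_sum, Finset.sum_congr rfl hcount, Finset.sum_const, Finset.card_product,
      nsmul_eq_mul]
    push_cast
    field_simp
  have hle' : (Fintype.card G : ℝ) ≤
      Fintype.card G * ∑ i, ((C i).card * ((A i).card / (C i).card : ℝ) ^ 2) := by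
    rw [Finset.mul_sum, ← Finset.sum_congr rfl fun i _ => hterm i]
    exact_mod_cast hle
  exact absurd hle' (not_le.2 (mul_lt_of_lt_one_right hG hsum))
end

section
/- Let q be an odd prime power, let F_q be a finite field with q elements, and let m ≥ 1. Then the order of a Sylow 2-subgroup of the symplectic group Sp_{2m}(F_q) (equivalently, the largest power of 2 dividing |Sp_{2m}(F_q)|) equals ((q^2 − 1)_2)^m * (m!)_2. -/
/-- `twoPart m` is the largest power of `2` dividing `m`, i.e. `2 ^ ν₂(m)`. -/
def twoPart (m : ℕ) : ℕ := 2 ^ (m.factorization 2)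

open Matrix

section Counting

variable {F : Type*} [Field F]

/-- All fibres of a surjective linear map have the same cardinality. -/
theorem LinearMap.card_fiber_mul_card_of_surjective {V W : Type*} [AddCommGroup V] [Module F V]
    [Finite V] [AddCommGroup W] [Module F W] {f : V →ₗ[F] W} (hf : Function.Surjective f) (w : W) :
    Nat.card {v // f v = w} * Nat.card W = Nat.card V := by
  have : Finite W := Finite.of_surjective f hf
  have := Fintype.ofFinite W
  have hcard : ∀ u : W, Nat.card {v // f v = u} = Nat.card {v // f v = w} := fun u ↦ by
    obtain ⟨a, rfl⟩ := hf u
    obtain ⟨b, rfl⟩ := hf w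
    refine Nat.card_congr ((Equiv.addRight (b - a)).subtypeEquiv fun v ↦ ?_)
    rw [Equiv.coe_addRight, map_add, map_sub, add_sub_left_comm, add_eq_left, sub_eq_zero]
  rw [← Nat.card_congr (Equiv.sigmaFiberEquiv f), Nat.card_sigma,
    Finset.sum_congr rfl fun u _ ↦ hcard u]
  simp [mul_comm]

/-- The number of pairs at which a nondegenerate form takes the value `1`. -/
theorem LinearMap.SeparatingLeft.card_pairs_apply_eq_one {V : Type*} [AddCommGroup V] [Module F V]
    [Finite V] {B : V →ₗ[F] V →ₗ[F] F} (hB : B.SeparatingLeft) :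
    Nat.card {v : V × V // B v.1 v.2 = 1} * Nat.card F = (Nat.card V - 1) * Nat.card V := by
  have := Fintype.ofFinite {x : V // x ≠ 0}
  let e : {v : V × V // B v.1 v.2 = 1} ≃ Σ x : {x : V // x ≠ 0}, {y // B x.1 y = 1} :=
    { toFun v := ⟨⟨v.1.1, fun h ↦ by simpa [h] using v.2⟩, v.1.2, v.2⟩
      invFun s := ⟨(s.1.1, s.2.1), s.2.2⟩
      left_inv _ := rfl
      right_inv _ := rfl }
  have hs (x : {x : V // x ≠ 0}) : Nat.card {y // B x.1 y = 1} * Nat.card F = Nat.card V :=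
    card_fiber_mul_card_of_surjective
      (LinearMap.surjective fun h ↦ x.2 (hB x.1 fun y ↦ by simp [h])) 1
  have hV : Nat.card {x : V // x ≠ 0} = Nat.card V - 1 := by
    have := Fintype.ofFinite V
    classical
    simp [Nat.card_eq_fintype_card, Fintype.card_subtype_compl]
  rw [Nat.card_congr e, Nat.card_sigma, Finset.sum_mul, Finset.sum_congr rfl fun x _ ↦ hs x,
    Finset.sum_const, smul_eq_mul, Finset.card_univ, ← Nat.card_eq_fintype_card, hV]

variable {V : Type*} [AddCommGroup V] [Module F V]

/-- A family of pairs is hyperbolic if its pairs span mutually orthogonal hyperbolic planes,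
each pair being a symplectic basis of its plane. -/
def IsHyperbolicFamily (B : V →ₗ[F] V →ₗ[F] F) {k : ℕ} (p : Fin k → V × V) : Prop :=
  ∀ i j, B (p i).1 (p j).1 = 0 ∧ B (p i).2 (p j).2 = 0 ∧
    B (p i).1 (p j).2 = if i = j then 1 else 0

/-- Pairing of a vector with all members of a family of pairs. -/
def pairingMap (B : V →ₗ[F] V →ₗ[F] F) {k : ℕ} (p : Fin k → V × V) :
    V →ₗ[F] (Fin k → F × F) :=
  LinearMap.pi fun j ↦ (B (p j).1).prod (B (p j).2)

theorem mem_ker_pairingMap {B : V →ₗ[F] V →ₗ[F] F} {k : ℕ} {p : Fin k → V × V} {v : V} :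
    v ∈ LinearMap.ker (pairingMap B p) ↔ ∀ j, B (p j).1 v = 0 ∧ B (p j).2 v = 0 := by
  simp [pairingMap, funext_iff]

theorem isHyperbolicFamily_cons {B : V →ₗ[F] V →ₗ[F] F} (hB : B.IsAlt) {k : ℕ} (v : V × V)
    (p : Fin k → V × V) :
    IsHyperbolicFamily B (Fin.cons v p : Fin (k + 1) → V × V) ↔
      IsHyperbolicFamily B p ∧ v.1 ∈ LinearMap.ker (pairingMap B p) ∧
        v.2 ∈ LinearMap.ker (pairingMap B p) ∧ B v.1 v.2 = 1 := by
  have hs (x y : V) : B x y = 0 → B y x = 0 := hB.isRefl x y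
  simp only [IsHyperbolicFamily, mem_ker_pairingMap, Fin.forall_fin_succ, Fin.cons_zero,
    Fin.cons_succ, hB.self_eq_zero, if_true, Fin.succ_inj, Fin.succ_ne_zero,
    (Fin.succ_ne_zero _).symm, if_false, true_and]
  constructor
  · rintro ⟨⟨h1, h2⟩, h3⟩
    exact ⟨fun i ↦ (h3 i).2, fun j ↦ ⟨(h3 j).1.1, hs _ _ (h2 j).2.2⟩,
      fun j ↦ ⟨(h3 j).1.2.2, (h3 j).1.2.1⟩, h1⟩
  · rintro ⟨h1, h2, h3, h4⟩
    refine ⟨⟨h4, fun j ↦ ⟨hs _ _ (h2 j).1, hs _ _ (h3 j).2, hs _ _ (h2 j).2⟩⟩,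
      fun i ↦ ⟨⟨(h2 i).1, (h3 i).2, (h3 i).1⟩, h1 i⟩⟩

variable {B : V →ₗ[F] V →ₗ[F] F} {k : ℕ}

theorem IsHyperbolicFamily.pairingMap_sum (hB : B.IsAlt) {p : Fin k → V × V}
    (hp : IsHyperbolicFamily B p) (c : Fin k → F × F) :
    pairingMap B p (∑ j, ((c j).1 • (p j).2 - (c j).2 • (p j).1)) = c := by
  have h21 (i j) : B (p i).2 (p j).1 = -if i = j then 1 else 0 := by
    rw [← hB.neg, (hp j i).2.2]; simp [eq_comm]
  ext i <;> simp [pairingMap, (hp i _).1, (hp i _).2.1, (hp i _).2.2, h21]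

/-- A nondegenerate alternating form stays nondegenerate on the orthogonal complement of a
hyperbolic family. -/
theorem IsHyperbolicFamily.separatingLeft_ker (hB : B.IsAlt) (hB' : B.SeparatingLeft)
    {p : Fin k → V × V} (hp : IsHyperbolicFamily B p) :
    (B.domRestrict₁₂ (LinearMap.ker (pairingMap B p))
      (LinearMap.ker (pairingMap B p))).SeparatingLeft := by
  rintro ⟨x, hx⟩ h
  rw [mem_ker_pairingMap] at hx
  have hs (j) : B x (p j).1 = 0 ∧ B x (p j).2 = 0 :=
    ⟨hB.isRefl _ _ (hx j).1, hB.isRefl _ _ (hx j).2⟩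
  refine Subtype.ext (hB' x fun v ↦ ?_)
  have hu := hp.pairingMap_sum hB (pairingMap B p v)
  set u := ∑ j, ((pairingMap B p v j).1 • (p j).2 - (pairingMap B p v j).2 • (p j).1) with hu'
  have h0 : B x u = 0 := by simp [hu', hs]
  have h1 : B x (v - u) = 0 := h ⟨v - u, by simp [hu]⟩
  simpa [h0] using h1

theorem IsHyperbolicFamily.card_ker_mul [Finite V] (hB : B.IsAlt) {p : Fin k → V × V}
    (hp : IsHyperbolicFamily B p) :
    Nat.card (LinearMap.ker (pairingMap B p)) * Nat.card F ^ (2 * k) = Nat.card V := by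
  have h := LinearMap.card_fiber_mul_card_of_surjective
    (fun c ↦ ⟨_, hp.pairingMap_sum hB c⟩ : Function.Surjective (pairingMap B p)) 0
  rw [Nat.card_fun, Nat.card_prod, Nat.card_fin, ← sq, ← pow_mul] at h
  exact h

/-- Extending a hyperbolic family by one pair. -/
theorem card_isHyperbolicFamily_succ [Finite F] [Finite V] (hB : B.IsAlt)
    (hB' : B.SeparatingLeft) {n : ℕ}
    (hV : Nat.card V = Nat.card F ^ (2 * (n + k))) :
    Nat.card {p : Fin (k + 1) → V × V // IsHyperbolicFamily B p} * Nat.card F =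
      Nat.card {p : Fin k → V × V // IsHyperbolicFamily B p} *
        ((Nat.card F ^ (2 * n) - 1) * Nat.card F ^ (2 * n)) := by
  have := Fintype.ofFinite {p : Fin k → V × V // IsHyperbolicFamily B p}
  let K (p : Fin k → V × V) := LinearMap.ker (pairingMap B p)
  let e : {p : Fin (k + 1) → V × V // IsHyperbolicFamily B p} ≃
      Σ p : {p : Fin k → V × V // IsHyperbolicFamily B p},
        {v : K p.1 × K p.1 // B.domRestrict₁₂ (K p.1) (K p.1) v.1 v.2 = 1} :=
    { toFun p :=
        have h := (isHyperbolicFamily_cons hB (p.1 0) (Fin.tail p.1)).1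
          (by rw [Fin.cons_self_tail]; exact p.2)
        ⟨⟨Fin.tail p.1, h.1⟩, ⟨(⟨(p.1 0).1, h.2.1⟩, ⟨(p.1 0).2, h.2.2.1⟩), h.2.2.2⟩⟩
      invFun s := ⟨Fin.cons (s.2.1.1.1, s.2.1.2.1) s.1.1,
        (isHyperbolicFamily_cons hB _ _).2 ⟨s.1.2, s.2.1.1.2, s.2.1.2.2, s.2.2⟩⟩
      left_inv p := Subtype.ext (Fin.cons_self_tail p.1)
      right_inv _ := rfl }
  have hK (p : {p : Fin k → V × V // IsHyperbolicFamily B p}) :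
      Nat.card (K p.1) = Nat.card F ^ (2 * n) := by
    have h := p.2.card_ker_mul hB
    rw [hV, mul_add, pow_add] at h
    exact Nat.eq_of_mul_eq_mul_right (pow_pos Nat.card_pos _) h
  have hs (p : {p : Fin k → V × V // IsHyperbolicFamily B p}) :=
    (p.2.separatingLeft_ker hB hB').card_pairs_apply_eq_one
  rw [Nat.card_congr e, Nat.card_sigma, Finset.sum_mul, Finset.sum_congr rfl fun p _ ↦ hs p,
    Finset.sum_congr rfl fun p _ ↦ by rw [hK p], Finset.sum_const, smul_eq_mul, Finset.card_univ,
    ← Nat.card_eq_fintype_card]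

end Counting

section Symplectic

variable {F : Type*} [Field F] (m : ℕ)

theorem isAlt_toLinearMap₂'_J :
    (toLinearMap₂' F (J (Fin m) F) :
      (Fin m ⊕ Fin m → F) →ₗ[F] (Fin m ⊕ Fin m → F) →ₗ[F] F).IsAlt := fun v ↦ by
  simp [toLinearMap₂'_apply', J, fromBlocks_mulVec, dotProduct, Fintype.sum_sum_type, neg_mulVec,
    mul_comm]

theorem separatingLeft_toLinearMap₂'_J :
    (toLinearMap₂' F (J (Fin m) F) :
      (Fin m ⊕ Fin m → F) →ₗ[F] (Fin m ⊕ Fin m → F) →ₗ[F] F).SeparatingLeft :=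
  LinearMap.separatingLeft_toLinearMap₂'_of_det_ne_zero' (isUnit_det_J _ _).ne_zero

/-- A matrix is symplectic iff its rows form a hyperbolic family. -/
theorem card_symplecticGroup_eq_card_isHyperbolicFamily :
    Nat.card (symplecticGroup (Fin m) F) =
      Nat.card {p : Fin m → (Fin m ⊕ Fin m → F) × (Fin m ⊕ Fin m → F) //
        IsHyperbolicFamily (toLinearMap₂' F (J (Fin m) F)) p} := by
  have hB := isAlt_toLinearMap₂'_J (F := F) m
  let e : Matrix (Fin m ⊕ Fin m) (Fin m ⊕ Fin m) F ≃
      (Fin m → (Fin m ⊕ Fin m → F) × (Fin m ⊕ Fin m → F)) :=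
    { toFun A i := (A (Sum.inr i), A (Sum.inl i))
      invFun p := of (Sum.elim (fun i ↦ (p i).2) fun i ↦ (p i).1)
      left_inv A := by ext (i | i) j <;> rfl
      right_inv p := rfl }
  refine Nat.card_congr (e.subtypeEquiv fun A ↦ ?_)
  have hA (i j) : (A * J (Fin m) F * Aᵀ) i j = toLinearMap₂' F (J (Fin m) F) (A i) (A j) := by
    rw [toLinearMap₂'_apply', dotProduct_mulVec]
    rfl
  have hs (i j) : toLinearMap₂' F (J (Fin m) F) (A (Sum.inl i)) (A (Sum.inr j)) =
      -toLinearMap₂' F (J (Fin m) F) (A (Sum.inr j)) (A (Sum.inl i)) := (hB.neg _ _).symm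
  have hJ : (∀ i j, (A * J (Fin m) F * Aᵀ) i j = J (Fin m) F i j) ↔ _ := Sum.forall
  rw [SymplecticGroup.mem_iff, ← Matrix.ext_iff, hJ]
  simp only [hA, hs, Sum.forall]
  simp only [J, fromBlocks_apply₁₁, fromBlocks_apply₁₂, fromBlocks_apply₂₁, fromBlocks_apply₂₂,
    Matrix.zero_apply, Matrix.neg_apply, neg_inj, one_apply]
  exact ⟨fun ⟨h1, h2⟩ i j ↦ ⟨(h2 i).2 j, (h1 i).1 j, (h2 i).1 j⟩, fun h ↦
    ⟨fun i ↦ ⟨fun j ↦ (h i j).2.1, fun j ↦ (h j i).2.2.trans (by simp only [eq_comm])⟩,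
      fun i ↦ ⟨fun j ↦ (h i j).2.2, fun j ↦ (h i j).1⟩⟩⟩

end Symplectic

section TwoPart

theorem twoPart_mul {a b : ℕ} (ha : a ≠ 0) (hb : b ≠ 0) :
    twoPart (a * b) = twoPart a * twoPart b := by
  simp [twoPart, Nat.factorization_mul ha hb, pow_add]

theorem twoPart_of_odd {a : ℕ} (ha : Odd a) : twoPart a = 1 := by
  simp [twoPart, Nat.factorization_eq_zero_of_not_dvd ha.not_two_dvd_nat]

theorem twoPart_pow_two_mul_sub_one {q n : ℕ} (hq : 1 < q) (hodd : Odd q) (hn : n ≠ 0) :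
    twoPart (q ^ (2 * n) - 1) = twoPart (q ^ 2 - 1) * twoPart n := by
  have h1 := padicValNat.pow_two_sub_one hq hodd.not_two_dvd_nat (n := 2 * n) (by lia) (by simp)
  have h2 := padicValNat.pow_two_sub_one hq hodd.not_two_dvd_nat (n := 2) (by lia) (by simp)
  rw [padicValNat.mul two_ne_zero hn] at h1
  simp only [twoPart, ← pow_add, Nat.factorization_def _ Nat.prime_two]
  congr 1
  lia

end TwoPart

theorem twoPart_card_isHyperbolicFamily {F : Type*} [Field F] [Finite F]
    (hodd : Odd (Nat.card F)) {V : Type*} [AddCommGroup V] [Module F V] [Finite V]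
    {B : V →ₗ[F] V →ₗ[F] F} (hB : B.IsAlt) (hB' : B.SeparatingLeft) (k n : ℕ)
    (hV : Nat.card V = Nat.card F ^ (2 * (n + k))) :
    Nat.card {p : Fin k → V × V // IsHyperbolicFamily B p} ≠ 0 ∧
    twoPart (Nat.card {p : Fin k → V × V // IsHyperbolicFamily B p}) * twoPart n.factorial =
      twoPart (Nat.card F ^ 2 - 1) ^ k * twoPart (n + k).factorial := by
  have hF : 1 < Nat.card F := Finite.one_lt_card
  induction k generalizing n with
  | zero =>
    have : Nat.card {p : Fin 0 → V × V // IsHyperbolicFamily B p} = 1 := by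
      have : Unique {p : Fin 0 → V × V // IsHyperbolicFamily B p} :=
        { default := ⟨Fin.elim0, fun i ↦ i.elim0⟩
          uniq _ := Subsingleton.elim _ _ }
      exact Nat.card_unique
    simp [this, twoPart]
  | succ k ih =>
    obtain ⟨h0, h⟩ := ih (n + 1) (by rw [hV]; ring_nf)
    have hc := card_isHyperbolicFamily_succ (k := k) hB hB' (n := n + 1) (by rw [hV]; ring_nf)
    have hsub : Nat.card F ^ (2 * (n + 1)) - 1 ≠ 0 :=
      Nat.sub_ne_zero_of_lt (Nat.one_lt_pow (by lia) hF)
    have hpow : Nat.card F ^ (2 * (n + 1)) ≠ 0 := by positivity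
    have hne : Nat.card {p : Fin (k + 1) → V × V // IsHyperbolicFamily B p} ≠ 0 := by
      intro h'
      rw [h', zero_mul] at hc
      exact mul_ne_zero h0 (mul_ne_zero hsub hpow) hc.symm
    refine ⟨hne, ?_⟩
    have ht := congrArg twoPart hc
    rw [twoPart_mul hne (by lia), twoPart_mul h0 (mul_ne_zero hsub hpow), twoPart_mul hsub hpow,
      twoPart_of_odd hodd, twoPart_of_odd hodd.pow,
      twoPart_pow_two_mul_sub_one hF hodd (by lia), mul_one, mul_one] at ht
    rw [Nat.factorial_succ, twoPart_mul (by lia) (Nat.factorial_ne_zero n)] at h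
    rw [ht, show n + (k + 1) = n + 1 + k by ring, pow_succ (twoPart _)]
    linear_combination twoPart (Nat.card F ^ 2 - 1) * h

/-- If `q` is an odd prime power and `F` is a field with `q` elements, then the order
of a Sylow `2`-subgroup of the symplectic group `Sp_{2m}(F)` equals
`((q^2 - 1)_2)^m * (m!)_2`. -/
theorem stmt6 (q m : ℕ) (hq : IsPrimePow q) (hqodd : Odd q) (hm : 1 ≤ m)
    (F : Type*) [Field F] [Fintype F] (hF : Fintype.card F = q)
    (P : Sylow 2 ↥(Matrix.symplecticGroup (Fin m) F)) :
    Nat.card ↥(P : Subgroup ↥(Matrix.symplecticGroup (Fin m) F)) =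
      twoPart (q ^ 2 - 1) ^ m * twoPart (Nat.factorial m) := by
  have hcard : Nat.card F = q := by rw [Nat.card_eq_fintype_card, hF]
  have h := (twoPart_card_isHyperbolicFamily (hcard ▸ hqodd) (isAlt_toLinearMap₂'_J (F := F) m)
    (separatingLeft_toLinearMap₂'_J m) m 0 (by simp [two_mul])).2
  rw [← card_symplecticGroup_eq_card_isHyperbolicFamily, hcard] at h
  rw [P.card_eq_multiplicity]
  simpa [twoPart] using h
end

section
/- Let G be the symmetric group on 8 letters and let H be a Sylow 2-subgroup of G. Then for every g ∈ G, the intersection H ∩ gHg⁻¹ is a nontrivial subgroup of G. -/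
/-- The permutations preserving the partition of `α` into the fibers of `f`. -/
def fiberStabilizer {α β : Type*} (f : α → β) : Subgroup (Equiv.Perm α) where
  carrier := {σ | ∀ x y, f (σ x) = f (σ y) ↔ f x = f y}
  one_mem' _ _ := Iff.rfl
  mul_mem' {σ τ} hσ hτ x y := (hσ (τ x) (τ y)).trans (hτ x y)
  inv_mem' {σ} hσ x y := by simpa using (hσ (σ⁻¹ x) (σ⁻¹ y)).symm

theorem mem_fiberStabilizer {α β : Type*} {f : α → β} {σ : Equiv.Perm α} :
    σ ∈ fiberStabilizer f ↔ ∀ x y, f (σ x) = f (σ y) ↔ f x = f y :=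
  Iff.rfl

/-- An involution that maps fibers into fibers preserves the partition into fibers. -/
theorem mem_fiberStabilizer_of_involutive {α β : Type*} {f : α → β} {σ : Equiv.Perm α}
    (hσ : Function.Involutive σ) (h : ∀ x y, f x = f y → f (σ x) = f (σ y)) :
    σ ∈ fiberStabilizer f := fun x y =>
  ⟨fun hxy => by simpa only [hσ x, hσ y] using h _ _ hxy, h x y⟩

/-- If `σ` preserves the fibers of `f`, each point lies in the same fiber of `g` as its image, and
every fiber of `g` meets at most two fibers of `f`, then `σ ^ 2` fixes each fiber of `f`. -/
theorem apply_sq_eq_of_mem_fiberStabilizer {α β γ : Type*} {f : α → β} {g : α → γ}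
    (hfg : ∀ x y z, g x = g y → g y = g z → f x = f y ∨ f y = f z ∨ f x = f z)
    {σ : Equiv.Perm α} (hσ : σ ∈ fiberStabilizer f) (hg : ∀ x, g (σ x) = g x) (x : α) :
    f ((σ ^ 2) x) = f x := by
  rw [mem_fiberStabilizer] at hσ
  rw [sq, Equiv.Perm.mul_apply]
  have h1 := hσ x (σ x)
  rcases hfg x (σ x) (σ (σ x)) (hg x).symm (hg (σ x)).symm with h | h | h
  · exact (h.trans (h1.2 h)).symm
  · exact ((h1.1 h).trans h).symm
  · exact h.symm

/-- The parent, in the complete binary tree of depth three, of a leaf. -/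
def leafParent (x : Fin 8) : ℕ := x / 2

/-- The grandparent, in the complete binary tree of depth three, of a leaf. -/
def leafGrandparent (x : Fin 8) : ℕ := leafParent x / 2

/-- The automorphism group of the complete binary tree of depth three, acting on its leaves. -/
def treeAut : Subgroup (Equiv.Perm (Fin 8)) :=
  fiberStabilizer leafParent ⊓ fiberStabilizer leafGrandparent

theorem isPGroup_treeAut : IsPGroup 2 treeAut := by
  rintro ⟨σ, hσ⟩
  refine ⟨3, Subtype.ext (Equiv.ext fun x => ?_)⟩
  have h2 := apply_sq_eq_of_mem_fiberStabilizer (g := fun _ : Fin 8 => ())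
    (by decide +kernel) hσ.2 (fun _ => rfl)
  have h4 := apply_sq_eq_of_mem_fiberStabilizer (g := leafGrandparent)
    (by decide +kernel) (pow_mem hσ.1 2) h2
  have h8 := apply_sq_eq_of_mem_fiberStabilizer (f := id) (g := leafParent)
    (by decide +kernel) (fun _ _ => ((σ ^ 2) ^ 2).injective.eq_iff) h4 x
  simpa [← pow_mul] using h8

/-- Whether `p` holds for all lists obtained from `acc` by prepending `n` elements of `s`, one after
the other, in such a way that no new element occurs more than `k` times. -/
def forallExtension (s : List ℕ) (k : ℕ) (p : List ℕ → Bool) : ℕ → List ℕ → Bool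
  | 0, acc => p acc
  | n + 1, acc => s.all fun a =>
      Nat.ble k (acc.countP (Nat.beq a)) || forallExtension s k p n (a :: acc)

theorem of_forallExtension {s : List ℕ} {k : ℕ} {p : List ℕ → Bool} {l acc : List ℕ}
    (h : forallExtension s k p l.length acc = true) (hs : ∀ a ∈ l, a ∈ s)
    (hk : ∀ a, (l ++ acc).count a ≤ k) : p (l.reverse ++ acc) = true := by
  induction l generalizing acc with
  | nil => exact h
  | cons a l ih =>
    rw [List.length_cons, forallExtension, List.all_eq_true] at h
    have hcount : acc.countP (Nat.beq a) = acc.count a :=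
      List.countP_congr fun b _ => by rw [Nat.beq_eq, beq_iff_eq, eq_comm]
    have hlt : ¬ Nat.ble k (acc.countP (Nat.beq a)) = true := by
      have := hk a
      rw [List.cons_append, List.count_cons_self, List.count_append] at this
      rw [Nat.ble_eq, hcount]
      lia
    rw [List.reverse_cons, List.append_assoc, List.singleton_append]
    refine ih ((Bool.or_eq_true_iff.1 (h a (hs a List.mem_cons_self))).resolve_left hlt)
      (fun b hb => hs b (List.mem_cons_of_mem _ hb)) fun b => ?_
    rw [List.perm_middle.count_eq]
    exact hk b

/-- Some involutions in `treeAut`, as lists of values. -/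
def treeInvolutions : List (List ℕ) :=
  [[1, 0, 3, 2, 5, 4, 7, 6], [1, 0, 3, 2, 6, 7, 4, 5], [1, 0, 3, 2, 7, 6, 5, 4],
    [0, 1, 2, 3, 4, 5, 7, 6], [0, 1, 2, 3, 5, 4, 6, 7], [0, 1, 3, 2, 4, 5, 6, 7],
    [1, 0, 2, 3, 4, 5, 6, 7], [4, 5, 6, 7, 0, 1, 2, 3], [4, 5, 7, 6, 0, 1, 3, 2],
    [5, 4, 6, 7, 1, 0, 2, 3], [5, 4, 7, 6, 1, 0, 3, 2], [6, 7, 4, 5, 2, 3, 0, 1],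
    [6, 7, 5, 4, 3, 2, 0, 1], [7, 6, 4, 5, 2, 3, 1, 0], [7, 6, 5, 4, 3, 2, 1, 0]]

/-- The self-map of the set of leaves with a given list of values. -/
def leafMap (h : List ℕ) (x : Fin 8) : Fin 8 := Fin.ofNat 8 (h.getD x 0)

theorem treeInvolutions_spec : ∀ h ∈ treeInvolutions,
    (∀ x, leafMap h (leafMap h x) = x) ∧ (∃ x, leafMap h x ≠ x) ∧
    (∀ x y, leafParent x = leafParent y → leafParent (leafMap h x) = leafParent (leafMap h y)) ∧
    (∀ x y, leafGrandparent x = leafGrandparent y →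
      leafGrandparent (leafMap h x) = leafGrandparent (leafMap h y)) ∧
    h.length = 8 ∧ ∀ x : Fin 8, h.getD x 0 = leafMap h x := by
  decide +kernel

/-- Whether the map with list of values `h` respects the tree in which the leaf `i` has parent
`l[i]`. -/
def respectsTree (l h : List ℕ) : Bool :=
  let z := l.zip (h.map fun i => l.getD i 0)
  z.all fun a => z.all fun b =>
    cond (Nat.beq a.1 b.1) (Nat.beq a.2 b.2)
      (cond (Nat.beq (a.1 / 2) (b.1 / 2)) (Nat.beq (a.2 / 2) (b.2 / 2)) true)

theorem apply_leafMap_of_respectsTree {w : Fin 8 → ℕ} {h : List ℕ} (hh : h ∈ treeInvolutions)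
    (hw : respectsTree (List.ofFn w) h = true) (x y : Fin 8) :
    (w x = w y → w (leafMap h x) = w (leafMap h y)) ∧
      (w x / 2 = w y / 2 → w (leafMap h x) / 2 = w (leafMap h y) / 2) := by
  obtain ⟨-, -, -, -, hlen, hval⟩ := treeInvolutions_spec h hh
  have hget (x : Fin 8) : (List.ofFn w).getD x 0 = w x := by
    rw [List.getD_eq_getElem _ _ (by simp only [List.length_ofFn, x.isLt]), List.getElem_ofFn]
  have hmem (x : Fin 8) : (w x, w (leafMap h x)) ∈
      (List.ofFn w).zip (h.map fun i => (List.ofFn w).getD i 0) := by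
    have hx : (x : ℕ) < h.length := hlen.symm ▸ x.isLt
    refine List.mem_iff_getElem.2 ⟨x, by
      simp only [List.length_zip, List.length_ofFn, List.length_map, hlen, min_self, x.isLt], ?_⟩
    rw [List.getElem_zip, List.getElem_map, List.getElem_ofFn, ← hget (leafMap h x), ← hval,
      List.getD_eq_getElem _ _ hx]
  have key := List.all_eq_true.1 (List.all_eq_true.1 hw _ (hmem x)) _ (hmem y)
  simp only [Bool.cond_eq_ite, Nat.beq_eq] at key
  split_ifs at key with h1 h2
  · exact ⟨fun _ => Nat.eq_of_beq_eq_true key, fun _ => by rw [Nat.eq_of_beq_eq_true key]⟩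
  · exact ⟨fun e => absurd e h1, fun _ => Nat.eq_of_beq_eq_true key⟩
  · exact ⟨fun e => absurd e h1, fun e => absurd e h2⟩

/-- However the eight leaves are distributed over the four parents, with the first leaf below the
first parent, one of `treeInvolutions` respects the resulting tree. -/
theorem forallExtension_treeInvolutions :
    forallExtension [0, 1, 2, 3] 2 (fun l => treeInvolutions.any (respectsTree l.reverse))
      7 [0] = true := by
  decide +kernel

theorem exists_mem_treeAut_conj_mem_treeAut_of_apply_zero {τ : Equiv.Perm (Fin 8)}
    (hτ : τ 0 = 0) : ∃ σ ∈ treeAut, σ ≠ 1 ∧ τ * σ * τ⁻¹ ∈ treeAut := by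
  set w : Fin 8 → ℕ := leafParent ∘ τ with hw
  have hcons : List.ofFn w = 0 :: List.ofFn fun i => w (Fin.succ i) := by
    rw [List.ofFn_succ, hw, Function.comp_apply, hτ]
    rfl
  have hperm : (List.ofFn w).Perm [0, 0, 1, 1, 2, 2, 3, 3] :=
    Equiv.Perm.ofFn_comp_perm τ leafParent
  have key := of_forallExtension (l := List.ofFn fun i => w (Fin.succ i))
    (by simpa only [List.length_ofFn] using forallExtension_treeInvolutions)
    (fun a ha => by
      simpa using hperm.mem_iff.1 (hcons ▸ List.mem_cons_of_mem 0 ha))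
    fun a => by
      rw [(List.perm_append_singleton _ _).count_eq, ← hcons, hperm.count_eq]
      simp only [List.count_cons, List.count_nil, beq_iff_eq]
      grind
  rw [← List.reverse_cons, ← hcons, List.reverse_reverse, List.any_eq_true] at key
  obtain ⟨h, hmem, hh⟩ := key
  replace hh := apply_leafMap_of_respectsTree hmem hh
  obtain ⟨hinv, ⟨z, hz⟩, hp, hgp, -⟩ := treeInvolutions_spec h hmem
  have hconj : Function.Involutive (τ * Function.Involutive.toPerm _ hinv * τ⁻¹) := fun x => by
    change τ (leafMap h (τ⁻¹ (τ (leafMap h (τ⁻¹ x))))) = x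
    rw [← Equiv.Perm.mul_apply τ⁻¹ τ, inv_mul_cancel, Equiv.Perm.one_apply, hinv,
      ← Equiv.Perm.mul_apply, mul_inv_cancel, Equiv.Perm.one_apply]
  refine ⟨Function.Involutive.toPerm _ hinv,
    ⟨mem_fiberStabilizer_of_involutive hinv hp, mem_fiberStabilizer_of_involutive hinv hgp⟩,
    fun h1 => hz (congrArg (fun σ : Equiv.Perm (Fin 8) => σ z) h1),
    mem_fiberStabilizer_of_involutive hconj fun x y hxy => ?_,
    mem_fiberStabilizer_of_involutive hconj fun x y hxy => ?_⟩
  · exact (hh (τ⁻¹ x) (τ⁻¹ y)).1 (by simpa [hw] using hxy)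
  · exact (hh (τ⁻¹ x) (τ⁻¹ y)).2 (by simpa [hw, leafGrandparent] using hxy)

theorem exists_mem_treeAut_apply_eq_zero (x : Fin 8) : ∃ σ ∈ treeAut, σ x = 0 := by
  have hinv : ∀ x y : Fin 8, y ^^^ x ^^^ x = y := by decide +kernel
  refine ⟨Function.Involutive.toPerm (· ^^^ x) (hinv x),
    ⟨mem_fiberStabilizer_of_involutive (hinv x) ?_,
      mem_fiberStabilizer_of_involutive (hinv x) ?_⟩, ?_⟩
  · change ∀ y z, leafParent y = leafParent z → leafParent (y ^^^ x) = leafParent (z ^^^ x)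
    revert x
    decide +kernel
  · change ∀ y z, leafGrandparent y = leafGrandparent z →
      leafGrandparent (y ^^^ x) = leafGrandparent (z ^^^ x)
    revert x
    decide +kernel
  · change x ^^^ x = 0
    revert x
    decide +kernel

theorem exists_mem_treeAut_conj_mem_treeAut (τ : Equiv.Perm (Fin 8)) :
    ∃ σ ∈ treeAut, σ ≠ 1 ∧ τ * σ * τ⁻¹ ∈ treeAut := by
  obtain ⟨ρ, hρ, h0⟩ := exists_mem_treeAut_apply_eq_zero (τ 0)
  obtain ⟨σ, hσ, hne, hconj⟩ :=
    exists_mem_treeAut_conj_mem_treeAut_of_apply_zero (τ := ρ * τ) h0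
  refine ⟨σ, hσ, hne, ?_⟩
  have := mul_mem (mul_mem (inv_mem hρ) hconj) hρ
  rwa [show ρ⁻¹ * (ρ * τ * σ * (ρ * τ)⁻¹) * ρ = τ * σ * τ⁻¹ by group] at this

/-- If `H` is a Sylow `2`-subgroup of the symmetric group `S₈`, then `H ∩ gHg⁻¹` is
nontrivial for every `g`. -/
theorem stmt8 (H : Sylow 2 (Equiv.Perm (Fin 8))) (g : Equiv.Perm (Fin 8)) :
    (H : Subgroup (Equiv.Perm (Fin 8))) ⊓
      (H : Subgroup (Equiv.Perm (Fin 8))).map (MulAut.conj g).toMonoidHom ≠ ⊥ := by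
  obtain ⟨P, hP⟩ := isPGroup_treeAut.exists_le_sylow
  obtain ⟨c, rfl⟩ := MulAction.exists_smul_eq (Equiv.Perm (Fin 8)) P H
  have hc {σ : Equiv.Perm (Fin 8)} (hσ : σ ∈ treeAut) : c * σ * c⁻¹ ∈ c • P :=
    Subgroup.smul_mem_pointwise_smul σ (MulAut.conj c) (P : Subgroup (Equiv.Perm (Fin 8))) (hP hσ)
  obtain ⟨σ, hσ, hne, hconj⟩ := exists_mem_treeAut_conj_mem_treeAut (c⁻¹ * g⁻¹ * c)
  intro hbot
  have hmem : c * σ * c⁻¹ ∈ (⊥ : Subgroup (Equiv.Perm (Fin 8))) := by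
    rw [← hbot]
    refine ⟨hc hσ, _, hc hconj, ?_⟩
    simp only [MulEquiv.coe_toMonoidHom, MulAut.conj_apply]
    group
  exact hne (conj_eq_one_iff.1 (Subgroup.mem_bot.1 hmem))
end

section
/- Let G be the automorphism group of the alternating group A_6 on 6 letters (so G ≅ L_2(9).2^2), and let H be a Sylow 2-subgroup of G. Then for every g ∈ G, the intersection H ∩ gHg⁻¹ is a nontrivial subgroup of G. -/
open Equiv MulAction

namespace AutA6

abbrev A6 : Type := ↥(alternatingGroup (Fin 6))

/-- The involution `(0 1)(2 3)`. -/
def t : A6 := ⟨⟨![1, 0, 3, 2, 4, 5], ![1, 0, 3, 2, 4, 5], by decide, by decide⟩,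
  Perm.mem_alternatingGroup.2 (by decide)⟩

/-- The element `(0 1 2 4)(3 5)`. -/
def y : A6 := ⟨⟨![1, 2, 4, 5, 0, 3], ![4, 0, 1, 5, 2, 3], by decide, by decide⟩,
  Perm.mem_alternatingGroup.2 (by decide)⟩

/-- The image of `y` under an outer involution of `A6` fixing `t`. -/
def y' : A6 := ⟨⟨![2, 4, 3, 5, 1, 0], ![5, 4, 0, 2, 1, 3], by decide, by decide⟩,
  Perm.mem_alternatingGroup.2 (by decide)⟩

theorem words_mem {G : Type*} [Group G] {L : Subgroup G} {a b : G} (ha : a ∈ L) (hb : b ∈ L) :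
    a * b ∈ L ∧ a * b * b * a * b * b * a ∈ L ∧ b * a * b * a * b * b * a * b * a ∈ L ∧
      a * b * b * b * a * b * a * b * b * a * b * a * b * b ∈ L := by
  simp only [L.mul_mem_cancel_right ha, L.mul_mem_cancel_right hb, ha, hb, and_self]

theorem exists_apply_zero : ∀ x : Fin 6,
    x = 0 ∨ ∃ i : Fin 5, (((t * y) ^ i.val * y : A6) : Perm (Fin 6)) 0 = x := by
  decide +kernel

theorem exists_apply_five : ∀ x : Fin 6, x ≠ 0 → ∃ i : Fin 5,
    (((t * y) ^ i.val : A6) : Perm (Fin 6)) 0 = 0 ∧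
      (((t * y) ^ i.val : A6) : Perm (Fin 6)) 5 = x := by
  decide +kernel

theorem exists_apply_one : ∀ x : Fin 6, x ≠ 0 → x ≠ 5 → ∃ k l : Fin 2, ∀ u : A6,
    u = (t * y * y * t * y * y * t) ^ k.val * (y * t * y * t * y * y * t * y * t) ^ l.val →
    (u : Perm (Fin 6)) 0 = 0 ∧ (u : Perm (Fin 6)) 5 = 5 ∧ (u : Perm (Fin 6)) 1 = x := by
  simp only [forall_eq]
  decide +kernel

set_option maxRecDepth 100000 in
theorem eq_pow_of_fixing : ∀ σ : Perm (Fin 6), σ 0 = 0 → σ 5 = 5 → σ 1 = 1 → Perm.sign σ = 1 →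
    ∃ m : Fin 3, σ = ((t * y * y * y * t * y * t * y * y * t * y * t * y * y) ^ m.val : A6) := by
  decide +kernel

theorem closure_t_y : Subgroup.closure {t, y} = (⊤ : Subgroup A6) := by
  refine (Subgroup.eq_top_iff' _).2 fun σ => ?_
  generalize hL : Subgroup.closure {t, y} = L
  have hy : y ∈ L := hL ▸ Subgroup.subset_closure (by simp)
  obtain ⟨hty, hv, hw, hc⟩ := words_mem (hL ▸ Subgroup.subset_closure (by simp) : t ∈ L) hy
  have step {u τ : A6} (hu : u ∈ L) (h : u⁻¹ * τ ∈ L) : τ ∈ L :=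
    (L.mul_mem_cancel_left (inv_mem hu)).1 h
  have fix {u τ : A6} {x z : Fin 6} (hu : (u : Perm (Fin 6)) x = z)
      (hτ : (τ : Perm (Fin 6)) x = z) : ((u⁻¹ * τ : A6) : Perm (Fin 6)) x = x := by
    change (u : Perm (Fin 6))⁻¹ ((τ : Perm (Fin 6)) x) = x
    rw [hτ, ← hu]
    exact (u : Perm (Fin 6)).symm_apply_apply x
  have inj (τ : A6) {x z : Fin 6} (hτ : (τ : Perm (Fin 6)) z = z) (h : x ≠ z) :
      (τ : Perm (Fin 6)) x ≠ z := fun h' =>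
    h ((τ : Perm (Fin 6)).injective (h'.trans hτ.symm))
  have fix₁ (τ : A6) (h0 : (τ : Perm (Fin 6)) 0 = 0) (h5 : (τ : Perm (Fin 6)) 5 = 5)
      (h1 : (τ : Perm (Fin 6)) 1 = 1) : τ ∈ L := by
    obtain ⟨m, hm⟩ := eq_pow_of_fixing τ h0 h5 h1 τ.2
    rw [Subtype.ext hm]
    exact pow_mem hc _
  have fix₅ (τ : A6) (h0 : (τ : Perm (Fin 6)) 0 = 0) (h5 : (τ : Perm (Fin 6)) 5 = 5) :
      τ ∈ L := by
    obtain ⟨k, l, h⟩ := exists_apply_one ((τ : Perm (Fin 6)) 1) (inj τ h0 (by decide))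
      (inj τ h5 (by decide))
    obtain ⟨h0', h5', h1'⟩ := h _ rfl
    exact step (mul_mem (pow_mem hv _) (pow_mem hw _))
      (fix₁ _ (fix h0' h0) (fix h5' h5) (fix h1' rfl))
  have fix₀ (τ : A6) (h0 : (τ : Perm (Fin 6)) 0 = 0) : τ ∈ L := by
    obtain ⟨i, h0', h5'⟩ := exists_apply_five ((τ : Perm (Fin 6)) 5) (inj τ h0 (by decide))
    exact step (pow_mem hty _) (fix₅ _ (fix h0' h0) (fix h5' rfl))
  obtain h0 | ⟨i, hi⟩ := exists_apply_zero ((σ : Perm (Fin 6)) 0)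
  · exact fix₀ σ h0
  · exact step (mul_mem (pow_mem hty _) hy) (fix₀ _ (fix hi rfl))

theorem hom_ext {M : Type*} [Monoid M] {f g : A6 →* M} (ht : f t = g t) (hy : f y = g y) :
    f = g := by
  refine MonoidHom.eq_of_eqOn_dense closure_t_y ?_
  rintro x (rfl | rfl)
  exacts [ht, hy]

/-- The `2`-(6,3,2) designs in one orbit of `A6`, as indicator functions of their blocks. A block
`{a, b, c}` is encoded by the number `2 ^ a + 2 ^ b + 2 ^ c`. -/
def design (i a b c : Fin 6) : Bool :=
  Nat.testBit (![5636234345463936, 72625354627885056, 5088574277951616, 73201257969371136,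
    1708916285114496, 76563701995954176] i) (2 ^ a.val + 2 ^ b.val + 2 ^ c.val)

/-- `p` describes the action of `σ` on the six designs. -/
def ActsAs (σ p : Perm (Fin 6)) : Prop :=
  ∀ i a b c, design (p i) (σ a) (σ b) (σ c) = design i a b c

instance (σ p : Perm (Fin 6)) : Decidable (ActsAs σ p) := by
  unfold ActsAs; infer_instance

theorem design_injective : ∀ i j, (∀ a b c, design i a b c = design j a b c) → i = j := by
  decide +kernel

theorem ActsAs.unique {σ p q : Perm (Fin 6)} (hp : ActsAs σ p) (hq : ActsAs σ q) : p = q := by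
  ext1 i
  refine design_injective _ _ fun a b c => ?_
  have h₁ := hp i (σ⁻¹ a) (σ⁻¹ b) (σ⁻¹ c)
  have h₂ := hq i (σ⁻¹ a) (σ⁻¹ b) (σ⁻¹ c)
  simp only [← Perm.mul_apply, mul_inv_cancel, Perm.one_apply] at h₁ h₂
  rw [h₁, h₂]

theorem ActsAs.one : ActsAs 1 1 := fun _ _ _ _ => rfl

theorem ActsAs.mul {σ p τ q : Perm (Fin 6)} (h : ActsAs σ p) (h' : ActsAs τ q) :
    ActsAs (σ * τ) (p * q) := fun i a b c => (h _ _ _ _).trans (h' i a b c)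

theorem ActsAs.inv {σ p : Perm (Fin 6)} (h : ActsAs σ p) : ActsAs σ⁻¹ p⁻¹ := fun i a b c => by
  have := h (p⁻¹ i) (σ⁻¹ a) (σ⁻¹ b) (σ⁻¹ c)
  simp only [← Perm.mul_apply, mul_inv_cancel, Perm.one_apply] at this
  exact this.symm

theorem actsAs_t : ActsAs t t := by decide +kernel

theorem actsAs_y : ActsAs y y' := by decide +kernel

theorem actsAs_y' : ActsAs y' y := by decide +kernel

theorem exists_actsAs (σ : A6) : ∃ p : A6, ActsAs σ p := by
  have hσ : σ ∈ Subgroup.closure {t, y} := closure_t_y ▸ Subgroup.mem_top σ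
  induction hσ using Subgroup.closure_induction with
  | mem x hx =>
    obtain rfl | rfl := hx
    exacts [⟨t, actsAs_t⟩, ⟨y', actsAs_y⟩]
  | one => exact ⟨1, ActsAs.one⟩
  | mul a b _ _ ha hb =>
    obtain ⟨p, hp⟩ := ha
    obtain ⟨q, hq⟩ := hb
    exact ⟨p * q, hp.mul hq⟩
  | inv a _ ha =>
    obtain ⟨p, hp⟩ := ha
    exact ⟨p⁻¹, hp.inv⟩

/-- The action of `A6` on the six designs, as an endomorphism of `A6`. -/
noncomputable def designHom : A6 →* A6 where
  toFun σ := (exists_actsAs σ).choose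
  map_one' := Subtype.ext ((exists_actsAs 1).choose_spec.unique ActsAs.one)
  map_mul' σ τ := Subtype.ext ((exists_actsAs (σ * τ)).choose_spec.unique
    ((exists_actsAs σ).choose_spec.mul (exists_actsAs τ).choose_spec))

theorem designHom_eq {σ p : A6} (h : ActsAs σ p) : designHom σ = p :=
  Subtype.ext ((exists_actsAs σ).choose_spec.unique h)

theorem designHom_comp_self : designHom.comp designHom = MonoidHom.id A6 := by
  apply hom_ext
  · simp [designHom_eq actsAs_t]
  · simp [designHom_eq actsAs_y, designHom_eq actsAs_y']

/-- An outer automorphism of `A6` of order two that fixes `t`. -/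
noncomputable def outer : MulAut A6 :=
  MonoidHom.toMulEquiv designHom designHom designHom_comp_self designHom_comp_self

theorem outer_t : outer t = t := designHom_eq actsAs_t

theorem outer_y : outer y = y' := designHom_eq actsAs_y

/-- The action of the symmetric group on `A6` by conjugation. -/
abbrev conjHom : Perm (Fin 6) →* MulAut A6 := MulAut.conjNormal

set_option maxRecDepth 100000 in
theorem eq_one_of_commute : ∀ q : Perm (Fin 6),
    q * t * q⁻¹ = t → q * y * q⁻¹ = y → q = 1 := by
  decide +kernel

set_option maxRecDepth 100000 in
theorem not_conj_y_y' : ∀ q : Perm (Fin 6), q * t * q⁻¹ = t → q * y * q⁻¹ ≠ y' := by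
  decide +kernel

set_option maxRecDepth 100000 in
theorem card_commuting_t :
    Fintype.card {q : Perm (Fin 6) // q * t * q⁻¹ = t} = 16 := by
  decide +kernel

theorem conjHom_injective : Function.Injective conjHom := by
  refine (injective_iff_map_eq_one _).2 fun q hq => ?_
  have h (x : A6) : q * x * q⁻¹ = (x : Perm (Fin 6)) := by
    rw [← MulAut.conjNormal_apply]
    exact congrArg Subtype.val (DFunLike.congr_fun hq x)
  exact eq_one_of_commute q (h t) (h y)

theorem mem_comap_stabilizer {q : Perm (Fin 6)} :
    q ∈ (stabilizer (MulAut A6) t).comap conjHom ↔ q * t * q⁻¹ = (t : Perm (Fin 6)) := by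
  rw [Subgroup.mem_comap, mem_stabilizer_iff, ← MulAut.conjNormal_apply, ← Subtype.ext_iff]
  rfl

theorem card_conj_stabilizer :
    Nat.card (((stabilizer (MulAut A6) t).comap conjHom).map conjHom) = 16 := by
  rw [Subgroup.card_map_of_injective conjHom_injective, ← card_commuting_t,
    ← Nat.card_eq_fintype_card]
  exact Nat.card_congr (Equiv.subtypeEquivRight fun _ => mem_comap_stabilizer)

theorem map_comap_ne_stabilizer :
    ((stabilizer (MulAut A6) t).comap conjHom).map conjHom ≠ stabilizer (MulAut A6) t := by
  intro h
  have : outer ∈ stabilizer (MulAut A6) t := outer_t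
  rw [← h] at this
  obtain ⟨q, hq, h'⟩ := this
  refine not_conj_y_y' q (mem_comap_stabilizer.1 hq) ?_
  rw [← MulAut.conjNormal_apply, ← outer_y, ← h']

set_option maxRecDepth 100000 in
theorem card_triangle_partners : Fintype.card
    {x : Perm (Fin 6) // x ^ 4 = 1 ∧ x ^ 2 ≠ 1 ∧ (t * x) ^ 5 = 1} = 32 := by
  decide +kernel

instance : Finite (MulAut A6) :=
  Finite.of_injective (fun φ : MulAut A6 => (φ : A6 → A6)) DFunLike.coe_injective

theorem card_stabilizer_le : Nat.card (stabilizer (MulAut A6) t) ≤ 32 := by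
  rw [← card_triangle_partners, ← Nat.card_eq_fintype_card]
  have hy : y ^ 4 = 1 ∧ y ^ 2 ≠ 1 ∧ (t * y) ^ 5 = 1 := by decide +kernel
  have hφ (φ : MulAut A6) (ht : φ t = t) :
      φ y ^ 4 = 1 ∧ φ y ^ 2 ≠ 1 ∧ (t * φ y) ^ 5 = 1 := by
    nth_rw 1 [← ht]
    simpa only [← map_mul, ← map_pow, Ne, EmbeddingLike.map_eq_one_iff] using hy
  refine Nat.card_le_card_of_injective (fun φ => ⟨φ.1 y, congrArg Subtype.val (hφ φ.1 φ.2).1,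
    fun h => (hφ φ.1 φ.2).2.1 (Subtype.ext h), congrArg Subtype.val (hφ φ.1 φ.2).2.2⟩) ?_
  · intro φ ψ h
    have hφ : φ.1 t = t := φ.2
    have hψ : ψ.1 t = t := ψ.2
    have : φ.1.toMonoidHom = ψ.1.toMonoidHom :=
      hom_ext (hφ.trans hψ.symm) (Subtype.ext (congrArg (fun z => z.1) h))
    exact Subtype.ext (MulEquiv.toMonoidHom_injective this)

theorem card_stabilizer : Nat.card (stabilizer (MulAut A6) t) = 32 := by
  have hle := Subgroup.map_comap_le conjHom (stabilizer (MulAut A6) t)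
  obtain ⟨k, hk⟩ := Subgroup.card_dvd_of_le hle
  rw [card_conj_stabilizer] at hk
  have hne : Nat.card (stabilizer (MulAut A6) t) ≠ 16 := fun h =>
    map_comap_ne_stabilizer (Subgroup.eq_of_le_of_card_ge hle (by rw [h, card_conj_stabilizer]))
  have := card_stabilizer_le
  have := Nat.card_pos (α := stabilizer (MulAut A6) t)
  omega

theorem cycleType_of_involution {s : A6} (h : s ^ 2 = 1) (h₁ : s ≠ 1) :
    (s : Perm (Fin 6)).cycleType = {2, 2} := by
  have h2 : (s : Perm (Fin 6)) ^ 2 = 1 := congrArg Subtype.val h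
  have hs : Perm.sign (s : Perm (Fin 6)) = 1 := s.2
  have hc := Perm.cycleType_of_pow_prime_eq_one h2
  have hle := Perm.sum_cycleType_le (s : Perm (Fin 6))
  rw [Perm.sign_of_cycleType] at hs
  have h0 : (s : Perm (Fin 6)).cycleType.card ≠ 0 := by
    rw [Ne, Perm.card_cycleType_eq_zero]
    exact fun h => h₁ (Subtype.ext h)
  generalize (s : Perm (Fin 6)).cycleType = m at *
  generalize m.card = n at *
  subst hc
  simp only [Multiset.sum_replicate, smul_eq_mul, Fintype.card_fin]
    at hle hs
  have : n ≤ 3 := by omega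
  interval_cases n
  · exact absurd rfl h0
  · exact absurd hs (by decide)
  · rfl
  · exact absurd hs (by decide)

theorem t_sq : t ^ 2 = 1 := by decide +kernel

theorem t_ne_one : t ≠ 1 := by decide +kernel

theorem mem_orbit_t {s : A6} : s ∈ orbit (MulAut A6) t ↔ s ^ 2 = 1 ∧ s ≠ 1 := by
  constructor
  · rintro ⟨φ, rfl⟩
    change (φ t) ^ 2 = 1 ∧ φ t ≠ 1
    rw [← map_pow, t_sq, map_one, Ne, EmbeddingLike.map_eq_one_iff]
    exact ⟨rfl, t_ne_one⟩
  · rintro ⟨h, h₁⟩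
    obtain ⟨q, hq⟩ := isConj_iff.1 (Perm.isConj_iff_cycleType_eq.2
      ((cycleType_of_involution t_sq t_ne_one).trans (cycleType_of_involution h h₁).symm))
    refine ⟨conjHom q, Subtype.ext ?_⟩
    rw [← hq]
    exact MulAut.conjNormal_apply q t

set_option maxRecDepth 100000 in
theorem card_involutions :
    Fintype.card {s : Perm (Fin 6) // s ^ 2 = 1 ∧ s ≠ 1 ∧ Perm.sign s = 1} = 45 := by
  decide +kernel

theorem index_stabilizer_t : (stabilizer (MulAut A6) t).index = 45 := by
  rw [index_stabilizer, ← Nat.card_coe_set_eq, ← card_involutions, ← Nat.card_eq_fintype_card]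
  refine Nat.card_congr ((Equiv.subtypeEquivRight fun _ => mem_orbit_t).trans
    { toFun s := ⟨s.1, congrArg Subtype.val s.2.1, fun h => s.2.2 (Subtype.ext h), s.1.2⟩
      invFun s := ⟨⟨s.1, s.2.2.2⟩, Subtype.ext s.2.1, fun h => s.2.2.1 (congrArg Subtype.val h)⟩
      left_inv _ := rfl
      right_inv _ := rfl })

theorem isPGroup_stabilizer : IsPGroup 2 (stabilizer (MulAut A6) t) :=
  IsPGroup.of_card (n := 5) card_stabilizer

set_option maxRecDepth 100000 in
theorem card_involutions_lt (P : Prop) [Decidable P] :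
    Fintype.card {x : Perm (Fin 6) // x ^ 2 = 1 ∧ x ≠ 1 ∧ Perm.sign x = 1 ∧ ((t * x) ^ 5 = 1 ↔ P)} <
      32 := by
  by_cases hP : P
  · simp only [hP, iff_true]
    decide +kernel
  · simp only [hP, iff_false]
    decide +kernel

/-- Two involutions of `A6`, one of them `t`, have a common nontrivial stabilizing automorphism. -/
theorem exists_fixing_ne_one {s : A6} (hs : s ∈ orbit (MulAut A6) t) :
    ∃ φ : MulAut A6, φ ≠ 1 ∧ φ • t = t ∧ φ • s = s := by
  classical
  obtain ⟨h2, h1⟩ := mem_orbit_t.1 hs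
  have hφ (φ : MulAut A6) (ht : φ t = t) :
      φ s ^ 2 = 1 ∧ φ s ≠ 1 ∧ ((t * φ s) ^ 5 = 1 ↔ (t * s) ^ 5 = 1) := by
    nth_rw 1 [← ht]
    simpa only [← map_mul, ← map_pow, Ne, EmbeddingLike.map_eq_one_iff, iff_self, and_true]
      using ⟨h2, h1⟩
  let f (φ : stabilizer (MulAut A6) t) : {x : Perm (Fin 6) //
      x ^ 2 = 1 ∧ x ≠ 1 ∧ Perm.sign x = 1 ∧ ((t * x) ^ 5 = 1 ↔ (t * s) ^ 5 = 1)} :=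
    ⟨φ.1 s, congrArg Subtype.val (hφ φ.1 φ.2).1, fun h => (hφ φ.1 φ.2).2.1 (Subtype.ext h), (φ.1 s).2,
      Subtype.ext_iff.symm.trans (hφ φ.1 φ.2).2.2⟩
  have hf : ¬ Function.Injective f := fun hf => by
    have := Nat.card_le_card_of_injective f hf
    rw [card_stabilizer, Nat.card_eq_fintype_card] at this
    exact absurd (card_involutions_lt ((t * s) ^ 5 = 1)) (by convert not_lt.2 this)
  obtain ⟨φ, ψ, h, hne⟩ := Function.not_injective_iff.1 hf
  refine ⟨(φ⁻¹ * ψ : stabilizer (MulAut A6) t), ?_, (φ⁻¹ * ψ).2, ?_⟩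
  · rw [Ne, OneMemClass.coe_eq_one, inv_mul_eq_one]
    exact hne
  · rw [Subgroup.coe_mul, Subgroup.coe_inv, mul_smul, inv_smul_eq_iff]
    exact Subtype.ext (congrArg Subtype.val h).symm

theorem exists_sylow_eq_stabilizer (H : Sylow 2 (MulAut A6)) :
    ∃ s ∈ orbit (MulAut A6) t, (H : Subgroup (MulAut A6)) = stabilizer (MulAut A6) s := by
  obtain ⟨h, rfl⟩ := exists_smul_eq (MulAut A6)
    (isPGroup_stabilizer.toSylow (by rw [index_stabilizer_t]; decide)) H
  exact ⟨h • t, mem_orbit t h, (stabilizer_smul_eq_stabilizer_map_conj h t).symm⟩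

end AutA6

open AutA6 in
/-- If `H` is a Sylow `2`-subgroup of `Aut(A₆) ≅ L₂(9).2²`, then `H ∩ gHg⁻¹` is
nontrivial for every `g`. -/
theorem stmt10 (H : Sylow 2 (MulAut ↥(alternatingGroup (Fin 6))))
    (g : MulAut ↥(alternatingGroup (Fin 6))) :
    (H : Subgroup (MulAut ↥(alternatingGroup (Fin 6)))) ⊓
      (H : Subgroup (MulAut ↥(alternatingGroup (Fin 6)))).map
        (MulAut.conj g).toMonoidHom ≠ ⊥ := by
  obtain ⟨_, ⟨h, rfl⟩, hH⟩ := exists_sylow_eq_stabilizer H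
  obtain ⟨φ, hφ, hφt, hφs⟩ := exists_fixing_ne_one (mem_orbit t (h⁻¹ * g * h))
  rw [hH, ← stabilizer_smul_eq_stabilizer_map_conj, Subgroup.ne_bot_iff_exists_ne_one]
  refine ⟨⟨h * φ * h⁻¹, ?_, ?_⟩, ?_⟩
  · simp [mem_stabilizer_iff, mul_smul, hφt]
  · simp only [mul_smul] at hφs
    change (h * φ * h⁻¹) • g • h • t = g • h • t
    rw [mul_smul, mul_smul, hφs, smul_inv_smul]
  · simpa [Subtype.ext_iff] using hφ
end

section
/- Let q ≥ 7 be a Mersenne prime, i.e. a prime of the form q = 2^k − 1, let F_q be the field with q elements, and let G = PGL_2(F_q) be the quotient of GL_2(F_q) by its center. Let H be a Sylow 2-subgroup of G. Then for every g ∈ G, the intersection H ∩ gHg⁻¹ is a nontrivial subgroup of G. -/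
open Matrix in
/-- The rotation by a quarter turn, as an element of `GL₂`. -/
noncomputable def quarterTurn (F : Type*) [Field F] : GeneralLinearGroup (Fin 2) F :=
  GeneralLinearGroup.mkOfDetNeZero !![0, -1; 1, 0] (by simp)

namespace quarterTurn

open Matrix

open scoped MatrixGroups

variable {F : Type*} [Field F]

/-- The projective general linear group of degree two, as a quotient of `GL₂`. -/
local notation "PGL" => GL (Fin 2) F ⧸ Subgroup.center (GL (Fin 2) F)

lemma coe_eq : (quarterTurn F : Matrix (Fin 2) (Fin 2) F) = !![0, -1; 1, 0] := rfl

lemma coe_mul_coe :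
    (quarterTurn F : Matrix (Fin 2) (Fin 2) F) * quarterTurn F = -1 := by
  rw [coe_eq]
  ext i j
  fin_cases i <;> fin_cases j <;> simp [Matrix.mul_apply]

lemma mk_eq_mk_iff {A B : GL (Fin 2) F} :
    (A : PGL) = B ↔
      ∃ c : F, (B : Matrix (Fin 2) (Fin 2) F) = c • (A : Matrix (Fin 2) (Fin 2) F) := by
  rw [QuotientGroup.eq, GeneralLinearGroup.mem_center_iff_val_mem_range_scalar]
  constructor
  · rintro ⟨c, hc⟩
    refine ⟨c, ?_⟩
    have h : B = A * (A⁻¹ * B) := by group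
    rw [h, Units.val_mul, ← hc, Matrix.scalar_apply, ← Matrix.smul_one_eq_diagonal]
    simp
  · rintro ⟨c, hc⟩
    refine ⟨c, ?_⟩
    rw [Units.val_mul, hc, Matrix.mul_smul, Units.inv_mul]
    simp [Matrix.smul_one_eq_diagonal]

lemma mk_eq_one_iff {A : GL (Fin 2) F} :
    (A : PGL) = 1 ↔ ∃ c : F, (A : Matrix (Fin 2) (Fin 2) F) = c • 1 := by
  rw [eq_comm, ← QuotientGroup.mk_one, mk_eq_mk_iff, Units.val_one]

lemma eq_zero_of_sq_add_sq (hF : ¬ IsSquare (-1 : F)) {a b : F} (h : a ^ 2 + b ^ 2 = 0) :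
    a = 0 ∧ b = 0 := by
  have hb : b = 0 := by
    by_contra hb
    refine hF ⟨a / b, ?_⟩
    field_simp
    linear_combination -h
  subst hb
  exact ⟨by simpa using h, rfl⟩

/-- A matrix normalizing the line of the quarter turn is a similarity of the plane. -/
lemma similarity_of_mk_mem_centralizer {A : GL (Fin 2) F}
    (hA : (A : PGL) ∈ Subgroup.centralizer {(quarterTurn F : PGL)}) :
    ∃ a b : F,
      (A : Matrix (Fin 2) (Fin 2) F) = a • 1 + b • (quarterTurn F : Matrix (Fin 2) (Fin 2) F)
      ∨ (A : Matrix (Fin 2) (Fin 2) F) = !![a, b; b, -a] := by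
  rw [Subgroup.mem_centralizer_singleton_iff, ← QuotientGroup.mk_mul, ← QuotientGroup.mk_mul,
    mk_eq_mk_iff] at hA
  obtain ⟨c, hc⟩ := hA
  simp only [Units.val_mul, coe_eq] at hc ⊢
  have hdet : (A : Matrix (Fin 2) (Fin 2) F).det ≠ 0 := (A.isUnit.map Matrix.detMonoidHom).ne_zero
  generalize (A : Matrix (Fin 2) (Fin 2) F) = M at hc hdet ⊢
  have h00 := congrFun (congrFun hc 0) 0
  have h01 := congrFun (congrFun hc 0) 1
  have h10 := congrFun (congrFun hc 1) 0
  have h11 := congrFun (congrFun hc 1) 1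
  simp [Matrix.mul_apply] at h00 h01 h10 h11
  rw [det_fin_two] at hdet
  have hc1 : c ^ 2 = 1 := by
    have : (c ^ 2 - 1) * (M 0 0 * M 1 1 - M 0 1 * M 1 0) = 0 := by
      grind
    have := (mul_eq_zero.mp this).resolve_right hdet
    linear_combination this
  refine ⟨M 0 0, M 1 0, ?_⟩
  rcases eq_or_eq_neg_of_sq_eq_sq c 1 (by rw [hc1, one_pow]) with rfl | rfl
  · left
    ext i j
    fin_cases i <;> fin_cases j <;> simp <;> grind
  · right
    ext i j
    fin_cases i <;> fin_cases j <;> simp <;> grind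

lemma isPGroup_centralizer [Fintype F] {q k : ℕ} (hq : q.Prime) (hk : q + 1 = 2 ^ k)
    (hq4 : q % 4 = 3) (hF : Fintype.card F = q) :
    IsPGroup 2 (Subgroup.centralizer {(quarterTurn F : PGL)}) := by
  have : Fact q.Prime := ⟨hq⟩
  have : CharP F q := charP_of_card_eq_prime hF
  rintro ⟨g, hg⟩
  obtain ⟨A, rfl⟩ := QuotientGroup.mk_surjective g
  simp only [Subtype.ext_iff, SubmonoidClass.mk_pow, OneMemClass.coe_one, ← QuotientGroup.mk_pow,
    mk_eq_one_iff, Units.val_pow_eq_pow_val]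
  obtain ⟨a, b, hab | hab⟩ := similarity_of_mk_mem_centralizer hg
  · refine ⟨k, a ^ 2 + b ^ 2, ?_⟩
    have hpow : (quarterTurn F : Matrix (Fin 2) (Fin 2) F) ^ q = - quarterTurn F := by
      obtain ⟨m, rfl⟩ : ∃ m, q = 4 * m + 3 := ⟨q / 4, by omega⟩
      have h2 : (quarterTurn F : Matrix (Fin 2) (Fin 2) F) ^ 2 = -1 := by rw [sq, coe_mul_coe]
      rw [show 4 * m + 3 = 2 * (2 * m + 1) + 1 by ring, pow_succ, pow_mul, h2,
        Odd.neg_one_pow ⟨m, rfl⟩, neg_one_mul]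
    have ha : a ^ q = a := hF ▸ FiniteField.pow_card a
    have hb : b ^ q = b := hF ▸ FiniteField.pow_card b
    have hcomm : Commute (a • (1 : Matrix (Fin 2) (Fin 2) F))
        (b • (quarterTurn F : Matrix (Fin 2) (Fin 2) F)) :=
      ((Commute.one_left _).smul_left a).smul_right b
    rw [← hk, hab, pow_succ, add_pow_char_of_commute _ hcomm, smul_pow, smul_pow, hpow, ha, hb,
      one_pow, coe_eq]
    ext i j
    fin_cases i <;> fin_cases j <;> simp [Matrix.mul_apply] <;> ring
  · refine ⟨1, a ^ 2 + b ^ 2, ?_⟩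
    rw [hab, pow_one, sq]
    ext i j
    fin_cases i <;> fin_cases j <;> simp [Matrix.mul_apply] <;> ring

lemma mk_ne_one : (quarterTurn F : PGL) ≠ 1 := by
  rw [Ne, mk_eq_one_iff]
  rintro ⟨c, hc⟩
  simpa [coe_eq] using congrFun (congrFun hc 1) 0

lemma det_commutator_ne_zero (hF : ¬ IsSquare (-1 : F)) (S : Matrix (Fin 2) (Fin 2) F)
    (h : quarterTurn F * S - S * quarterTurn F ≠ 0) :
    (quarterTurn F * S - S * quarterTurn F).det ≠ 0 := by
  contrapose! h
  rw [coe_eq] at h ⊢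
  have h' : (S 0 1 + S 1 0) ^ 2 + (S 0 0 - S 1 1) ^ 2 = 0 := by
    simp [det_fin_two, Matrix.mul_apply, Matrix.vecMul, dotProduct] at h
    linear_combination -h
  obtain ⟨h1, h2⟩ := eq_zero_of_sq_add_sq hF h'
  ext i j
  fin_cases i <;> fin_cases j <;> simp [Matrix.mul_apply, Matrix.vecMul, dotProduct] <;> grind

/-- Any two conjugates of the quarter turn in `PGL₂` are centralized by a common nontrivial
element: their commutator as matrices, or the quarter turn itself if they commute. -/
lemma exists_ne_one_mem_centralizer (hF : ¬ IsSquare (-1 : F)) (h2 : (2 : F) ≠ 0) (y : PGL) :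
    ∃ u : PGL, u ≠ 1 ∧ u ∈ Subgroup.centralizer {(quarterTurn F : PGL)} ∧
      y⁻¹ * u * y ∈ Subgroup.centralizer {(quarterTurn F : PGL)} := by
  obtain ⟨Y, rfl⟩ := QuotientGroup.mk_surjective y
  suffices h : ∃ u : PGL, u ≠ 1 ∧ Commute u (quarterTurn F : PGL) ∧
      Commute u ((Y * quarterTurn F * Y⁻¹ : GL (Fin 2) F) : PGL) by
    obtain ⟨u, hu, hut, hus⟩ := h
    refine ⟨u, hu, Subgroup.mem_centralizer_singleton_iff.mpr hut.eq,
      Subgroup.mem_centralizer_singleton_iff.mpr ?_⟩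
    have := hus.eq
    simp only [QuotientGroup.mk_mul, QuotientGroup.mk_inv] at this
    generalize (Y : PGL) = y at *
    generalize (quarterTurn F : PGL) = t at *
    calc y⁻¹ * u * y * t = y⁻¹ * (u * (y * t * y⁻¹)) * y := by group
      _ = t * (y⁻¹ * u * y) := by rw [this]; group
  have hS : ((Y * quarterTurn F * Y⁻¹ : GL (Fin 2) F) : Matrix (Fin 2) (Fin 2) F) *
      (Y * quarterTurn F * Y⁻¹ : GL (Fin 2) F) = -1 := by
    have : Y * quarterTurn F * Y⁻¹ * (Y * quarterTurn F * Y⁻¹) =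
      Y * (quarterTurn F * quarterTurn F) * Y⁻¹ := by group
    rw [← Units.val_mul, this, Units.val_mul, Units.val_mul, Units.val_mul, coe_mul_coe]
    simp
  generalize Y * quarterTurn F * Y⁻¹ = S at *
  by_cases h0 : (quarterTurn F : Matrix (Fin 2) (Fin 2) F) * S - S * quarterTurn F = 0
  · refine ⟨quarterTurn F, mk_ne_one, Commute.refl _, ?_⟩
    have : quarterTurn F * S = S * quarterTurn F := Units.ext (sub_eq_zero.mp h0)
    rw [Commute, SemiconjBy, ← QuotientGroup.mk_mul, this, QuotientGroup.mk_mul]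
  · let U := GeneralLinearGroup.mkOfDetNeZero _ (det_commutator_ne_zero hF _ h0)
    have hU : (U : Matrix (Fin 2) (Fin 2) F) = quarterTurn F * S - S * quarterTurn F := rfl
    have hT := coe_mul_coe (F := F)
    have hUT : (quarterTurn F : Matrix (Fin 2) (Fin 2) F) * U = (-1 : F) • (U * quarterTurn F) := by
      rw [hU, mul_sub, sub_mul, mul_assoc (S : Matrix (Fin 2) (Fin 2) F), hT, ← mul_assoc, hT]
      simp [mul_assoc]
      abel
    have hUS : (S : Matrix (Fin 2) (Fin 2) F) * U = (-1 : F) • (U * S) := by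
      rw [hU, mul_sub, sub_mul, mul_assoc (quarterTurn F : Matrix (Fin 2) (Fin 2) F), hS,
        ← mul_assoc (S : Matrix (Fin 2) (Fin 2) F) S, hS]
      simp [mul_assoc]
    refine ⟨U, ?_, mk_eq_mk_iff.mpr ⟨-1, hUT⟩, mk_eq_mk_iff.mpr ⟨-1, hUS⟩⟩
    rw [Ne, mk_eq_one_iff]
    rintro ⟨c, hc⟩
    have hc0 : c = 0 := by
      have := congrFun (congrFun hUT 1) 0
      simp [hc, coe_eq] at this
      grind
    apply h0
    rw [← hU, hc, hc0, zero_smul]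

end quarterTurn

/-- If `q ≥ 7` is a Mersenne prime, `F` the field with `q` elements, and `H` a Sylow
`2`-subgroup of `PGL₂(F) = GL₂(F)/Z(GL₂(F))`, then `H ∩ gHg⁻¹` is nontrivial for
every `g`. -/
theorem stmt11 (q : ℕ) (hq : q.Prime) (hmer : ∃ k : ℕ, q = 2 ^ k - 1) (h7 : 7 ≤ q)
    (F : Type*) [Field F] [Fintype F] (hF : Fintype.card F = q)
    (H : Sylow 2 (Matrix.GeneralLinearGroup (Fin 2) F ⧸
      Subgroup.center (Matrix.GeneralLinearGroup (Fin 2) F)))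
    (g : Matrix.GeneralLinearGroup (Fin 2) F ⧸
      Subgroup.center (Matrix.GeneralLinearGroup (Fin 2) F)) :
    (H : Subgroup _) ⊓ (H : Subgroup _).map (MulAut.conj g).toMonoidHom ≠ ⊥ := by
  obtain ⟨k, hk⟩ := hmer
  have hk1 : q + 1 = 2 ^ k := by omega
  have hq4 : q % 4 = 3 := by
    obtain ⟨m, rfl⟩ : ∃ m, k = m + 2 := by
      refine ⟨k - 2, (Nat.sub_add_cancel ?_).symm⟩
      by_contra! hlt
      interval_cases k <;> omega
    rw [pow_add] at hk1
    omega
  have hsq : ¬ IsSquare (-1 : F) := by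
    rw [FiniteField.isSquare_neg_one_iff, hF]
    simpa using hq4
  have h2 : (2 : F) ≠ 0 := by
    refine fun h => hsq ⟨1, ?_⟩
    linear_combination -h
  have : Fact (Nat.Prime 2) := ⟨Nat.prime_two⟩
  obtain ⟨P, hP⟩ := (quarterTurn.isPGroup_centralizer hq hk1 hq4 hF).exists_le_sylow
  obtain ⟨x, rfl⟩ := MulAction.exists_smul_eq (Matrix.GeneralLinearGroup (Fin 2) F ⧸
    Subgroup.center (Matrix.GeneralLinearGroup (Fin 2) F)) P H
  obtain ⟨u, hu, hu1, hu2⟩ := quarterTurn.exists_ne_one_mem_centralizer hsq h2 (x⁻¹ * g * x)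
  intro hbot
  refine hu (conj_eq_one_iff.mp (Subgroup.mem_bot.mp (hbot ▸ Subgroup.mem_inf.mpr ⟨?_, ?_⟩) :
    x * u * x⁻¹ = 1))
  · rw [Sylow.coe_subgroup_smul]
    exact Subgroup.smul_mem_pointwise_smul u (MulAut.conj x) _ (hP hu1)
  · refine ⟨_, Subgroup.smul_mem_pointwise_smul _ (MulAut.conj x) _ (hP hu2), ?_⟩
    simp only [MulAut.smul_def, MulAut.conj_apply, MulEquiv.toMonoidHom_eq_coe, MonoidHom.coe_coe]
    group
end

section
/- Let n ≥ 4, and let q be either 9, or a Fermat prime (a prime of the form 2^k + 1), or a Mersenne prime (a prime of the form 2^k − 1). Let F_q be the field with q elements, let G = PGL_n(F_q) be the quotient of GL_n(F_q) by its center, and let H be a Sylow 2-subgroup of G. Then there exists g ∈ G such that H ∩ gHg⁻¹ is the trivial subgroup. -/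
theorem Subgroup.exists_conj_inf_eq_bot_of_odd_index {G : Type*} [Group G] [Finite G]
    (K : Subgroup G) (hK : ¬ 2 ∣ K.index) (g : G)
    (hg : ∀ h ∈ K, ∀ h' ∈ K, ∀ z ∈ Subgroup.center G, h * g = z * (g * h') →
      h ∈ Subgroup.center G)
    (H : Subgroup (G ⧸ Subgroup.center G)) (hH : IsPGroup 2 H) :
    ∃ x : G ⧸ Subgroup.center G, H ⊓ H.map (MulAut.conj x).toMonoidHom = ⊥ := by
  have : Fact (Nat.Prime 2) := ⟨Nat.prime_two⟩
  set π := QuotientGroup.mk' (Subgroup.center G)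
  have hπs : Function.Surjective π := QuotientGroup.mk'_surjective _
  set L := K.map π
  have hLi : ¬ 2 ∣ Nat.card ((G ⧸ Subgroup.center G) ⧸ L) := fun h =>
    hK (h.trans (K.index_map_dvd hπs))
  obtain ⟨y, hy⟩ := hH.nonempty_fixed_point_of_prime_not_dvd_card
    ((G ⧸ Subgroup.center G) ⧸ L) hLi
  obtain ⟨y, rfl⟩ := QuotientGroup.mk_surjective y
  have key : ∀ h ∈ H, ∃ k ∈ K, y⁻¹ * h * y = π k := by
    intro h hh
    have h1 := hy ⟨h, hh⟩
    have h2 : ((h * y : G ⧸ Subgroup.center G) : (G ⧸ Subgroup.center G) ⧸ L) = y := h1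
    obtain ⟨k, hk, hk'⟩ := QuotientGroup.eq.1 h2.symm
    exact ⟨k, hk, by rw [hk', mul_assoc]⟩
  refine ⟨y * π g * y⁻¹, (Subgroup.eq_bot_iff_forall _).2 ?_⟩
  rintro a ⟨ha, b, hb, hab⟩
  obtain ⟨k, hk, hk'⟩ := key a ha
  obtain ⟨l, hl, hl'⟩ := key b hb
  have hab' : (y * π g * y⁻¹) * b * (y * π g * y⁻¹)⁻¹ = a := hab
  have hkl : π (g * l) = π (k * g) := by
    rw [map_mul, map_mul, ← hk', ← hl', ← hab']
    group
  obtain ⟨z, hz, hz'⟩ := (QuotientGroup.mk'_eq_mk' _).1 hkl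
  have hkc := hg k hk l hl z hz (by rw [← hz', Subgroup.mem_center_iff.1 hz])
  have : π k = 1 := (QuotientGroup.eq_one_iff k).2 hkc
  rw [this] at hk'
  have : a = y * (y⁻¹ * a * y) * y⁻¹ := by group
  rw [this, hk']; group

theorem Matrix.GeneralLinearGroup.exists_conj_inf_eq_bot {n : ℕ} {F V : Type*} [Field F] [Finite F]
    [AddCommGroup V] [Nontrivial V] [Module F V] (b : Module.Basis (Fin n) F V)
    (K : Subgroup (LinearMap.GeneralLinearGroup F V))
    (hK : padicValNat 2 (Nat.card (GL (Fin n) F)) ≤ padicValNat 2 (Nat.card K))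
    (g : LinearMap.GeneralLinearGroup F V)
    (hg : ∀ h ∈ K, ∀ h' ∈ K, ∀ z : F, z ≠ 0 → (∀ v, h.1 (g.1 v) = z • g.1 (h'.1 v)) →
      ∃ a : F, ∀ v, h.1 v = a • v)
    (H : Subgroup (GL (Fin n) F ⧸ Subgroup.center (GL (Fin n) F))) (hH : IsPGroup 2 H) :
    ∃ x : GL (Fin n) F ⧸ Subgroup.center (GL (Fin n) F),
      H ⊓ H.map (MulAut.conj x).toMonoidHom = ⊥ := by
  cases nonempty_fintype F
  have : Fact (Nat.Prime 2) := ⟨Nat.prime_two⟩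
  let e : GL (Fin n) F ≃* LinearMap.GeneralLinearGroup F V := toLin' b
  have hcard : Nat.card (LinearMap.GeneralLinearGroup F V) = Nat.card (GL (Fin n) F) :=
    Nat.card_congr e.symm.toEquiv
  have : Finite (LinearMap.GeneralLinearGroup F V) := Finite.of_equiv _ e.toEquiv
  have hi : ¬ 2 ∣ (K.comap e.toMonoidHom).index := by
    rw [Subgroup.index_comap_of_surjective _ e.surjective]
    intro h
    have h1 := K.card_mul_index
    have hne : K.index ≠ 0 := Subgroup.index_ne_zero_of_finite
    rw [← hcard, ← h1, padicValNat.mul Nat.card_pos.ne' hne] at hK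
    have := one_le_padicValNat_of_dvd hne h
    omega
  refine Subgroup.exists_conj_inf_eq_bot_of_odd_index _ hi (e.symm g) ?_ H hH
  intro h hh h' hh' z hz heq
  obtain ⟨a, ha⟩ := mem_center_iff_val_mem_range_scalar.1 hz
  have hza : ∀ v, (e z).1 v = a • v := by
    intro v
    have h1 := toLin'_apply b z v
    rw [← ha, Matrix.scalar_apply, ← Matrix.smul_one_eq_diagonal, Matrix.smul_mulVec,
      Matrix.one_mulVec, map_smul, Fintype.linearCombination_apply, b.sum_repr] at h1
    exact h1
  have ha0 : a ≠ 0 := by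
    rintro rfl
    obtain ⟨v, hv⟩ := exists_ne (0 : V)
    have h1 : (e z)⁻¹.1 ((e z).1 v) = v :=
      congrArg (fun x : LinearMap.GeneralLinearGroup F V => x.1 v) (inv_mul_cancel (e z))
    rw [hza, zero_smul, map_zero] at h1
    exact hv h1.symm
  obtain ⟨c, hc⟩ := hg (e h) hh (e h') hh' a ha0 (fun v => by
    have := congrArg e heq
    rw [map_mul, map_mul, map_mul, e.apply_symm_apply] at this
    have := congrArg (fun x : LinearMap.GeneralLinearGroup F V => x.1 v) this
    simpa [hza] using this)
  refine Subgroup.mem_center_iff.2 fun x => e.injective ?_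
  rw [map_mul, map_mul]
  ext v
  change (e x).1 ((e h).1 v) = (e h).1 ((e x).1 v)
  rw [hc, hc, map_smul]

section CharTwo

variable (n : ℕ) (F : Type*) [Field F]

/-- The Borel subgroup of upper triangular matrices. -/
def upperTriangularGroup : Subgroup (GL (Fin n) F) where
  carrier := {A | A.1.BlockTriangular id}
  one_mem' := Matrix.blockTriangular_one
  mul_mem' := Matrix.BlockTriangular.mul
  inv_mem' {A} hA := by
    have : Invertible A.1 := A.invertible
    change (A⁻¹).1.BlockTriangular id
    rw [Matrix.coe_units_inv]
    exact Matrix.blockTriangular_inv_of_blockTriangular hA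

variable {n F}

theorem mem_upperTriangularGroup {A : GL (Fin n) F} :
    A ∈ upperTriangularGroup n F ↔ ∀ i j, j < i → A.1 i j = 0 :=
  ⟨fun h _ _ hij => h hij, fun h _ _ hij => h _ _ hij⟩

theorem diag_ne_zero_of_mem_upperTriangularGroup {A : GL (Fin n) F}
    (hA : A ∈ upperTriangularGroup n F) (i : Fin n) : A.1 i i ≠ 0 := by
  have h := A.det_ne_zero
  rw [Matrix.det_of_isUpperTriangular hA] at h
  exact Finset.prod_ne_zero_iff.1 h i (Finset.mem_univ i)

theorem eq_one_of_card_eq_two [Fintype F] (hF : Fintype.card F = 2) {a : F} (ha : a ≠ 0) :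
    a = 1 := by
  have := FiniteField.pow_card_sub_one_eq_one a ha
  rwa [hF, pow_one] at this

theorem card_upperTriangularGroup [Fintype F] (hF : Fintype.card F = 2) :
    Nat.card (upperTriangularGroup n F) = ∏ j : Fin n, 2 ^ (j : ℕ) := by
  let M : (∀ j : Fin n, Fin j → F) → Matrix (Fin n) (Fin n) F := fun f =>
    Matrix.of fun i j => if h : i < j then f j ⟨i, h⟩ else if i = j then 1 else 0
  have hM : ∀ f, (M f).BlockTriangular id := fun f i j hij => by
    simp [M, (show j < i from hij).ne', not_lt.2 (le_of_lt (show j < i from hij))]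
  have hdet : ∀ f, (M f).det ≠ 0 := fun f => by
    rw [Matrix.det_of_isUpperTriangular (hM f)]
    simp [M]
  let φ : (∀ j : Fin n, Fin j → F) → upperTriangularGroup n F := fun f =>
    ⟨Matrix.GeneralLinearGroup.mkOfDetNeZero (M f) (hdet f), hM f⟩
  have hφ : Function.Bijective φ := by
    constructor
    · intro f f' h
      funext j i
      have hM' : M f = M f' := congrArg (fun A : upperTriangularGroup n F => A.1.1) h
      have hij : (⟨i, i.2.trans j.2⟩ : Fin n) < j := i.2
      have h1 := congrFun (congrFun hM' ⟨i, i.2.trans j.2⟩) j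
      simp only [M, Matrix.of_apply] at h1
      rwa [dif_pos hij, dif_pos hij] at h1
    · rintro ⟨A, hA⟩
      let f : ∀ j : Fin n, Fin j → F := fun j i => A.1 ⟨i, i.2.trans j.2⟩ j
      refine ⟨f, Subtype.ext (Units.ext (Matrix.ext fun i j => ?_))⟩
      change M f i j = A.1 i j
      rcases lt_trichotomy i j with h | h | h
      · simp [M, f, h]
      · subst h
        simp [M, eq_one_of_card_eq_two hF (diag_ne_zero_of_mem_upperTriangularGroup hA i)]
      · simp [M, h.not_gt, h.ne', mem_upperTriangularGroup.1 hA i j h]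
  rw [← Nat.card_congr (Equiv.ofBijective φ hφ), Nat.card_pi]
  simp [Nat.card_eq_fintype_card, hF]

theorem not_two_dvd_index_upperTriangularGroup [Fintype F] (hF : Fintype.card F = 2) :
    ¬ 2 ∣ (upperTriangularGroup n F).index := by
  have h := (upperTriangularGroup n F).card_mul_index
  have hterm : ∀ i : Fin n, 2 ^ n - 2 ^ (i : ℕ) = 2 ^ (i : ℕ) * (2 ^ (n - i) - 1) := by
    intro i
    rw [Nat.mul_sub, ← pow_add, mul_one, Nat.add_sub_cancel' i.2.le]
  rw [card_upperTriangularGroup hF, Matrix.card_GL_field, hF, Finset.prod_congr rfl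
    (fun i _ => hterm i), Finset.prod_mul_distrib] at h
  rw [Nat.eq_of_mul_eq_mul_left (Finset.prod_pos fun i _ => by positivity) h,
    Nat.prime_two.prime.dvd_finsetProd_iff]
  rintro ⟨i, -, hi⟩
  have h1 : 2 ∣ 2 ^ (n - (i : ℕ)) := dvd_pow_self 2 (by omega)
  have h2 : 0 < 2 ^ (n - (i : ℕ)) := by positivity
  omega

/-- The antidiagonal permutation matrix. -/
def antidiagonalGL (n : ℕ) (F : Type*) [Field F] : GL (Fin n) F where
  val := (1 : Matrix (Fin n) (Fin n) F).submatrix Fin.revPerm id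
  inv := (1 : Matrix (Fin n) (Fin n) F).submatrix Fin.revPerm id
  val_inv := by
    rw [Matrix.mul_submatrix_one]
    ext i j
    simp [Matrix.one_apply]
  inv_val := by
    rw [Matrix.mul_submatrix_one]
    ext i j
    simp [Matrix.one_apply]

theorem exists_conj_inf_eq_bot_of_card_eq_two [Fintype F] (hF : Fintype.card F = 2)
    (H : Subgroup (GL (Fin n) F ⧸ Subgroup.center (GL (Fin n) F))) (hH : IsPGroup 2 H) :
    ∃ x : GL (Fin n) F ⧸ Subgroup.center (GL (Fin n) F),
      H ⊓ H.map (MulAut.conj x).toMonoidHom = ⊥ := by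
  refine Subgroup.exists_conj_inf_eq_bot_of_odd_index _
    (not_two_dvd_index_upperTriangularGroup hF) (antidiagonalGL n F) ?_ H hH
  intro h hh h' hh' z hz heq
  obtain ⟨a, ha⟩ := Matrix.GeneralLinearGroup.mem_center_iff_val_mem_range_scalar.1 hz
  suffices h = 1 from this ▸ one_mem _
  have hmat : h.1.submatrix id Fin.rev = a • h'.1.submatrix Fin.rev id := by
    have h1 : h.1 * (antidiagonalGL n F).1 = z.1 * ((antidiagonalGL n F).1 * h'.1) :=
      congrArg Units.val heq
    simp only [antidiagonalGL] at h1
    rw [Matrix.mul_submatrix_one, ← Equiv.coe_refl, Matrix.one_submatrix_mul, ← ha,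
      Matrix.scalar_apply, ← Matrix.smul_one_eq_diagonal, Matrix.smul_mul, Matrix.one_mul] at h1
    exact h1
  ext i j
  rw [Units.val_one]
  rcases lt_trichotomy i j with hij | hij | hij
  · have h1 := congrFun (congrFun hmat i) (Fin.rev j)
    have h2 := mem_upperTriangularGroup.1 hh' (Fin.rev i) (Fin.rev j) (Fin.rev_lt_rev.2 hij)
    simp only [Matrix.submatrix_apply, Matrix.smul_apply, Fin.rev_rev, id, h2, smul_zero] at h1
    rw [h1, Matrix.one_apply_ne hij.ne]
  · subst hij
    rw [Matrix.one_apply_eq,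
      eq_one_of_card_eq_two hF (diag_ne_zero_of_mem_upperTriangularGroup hh i)]
  · rw [mem_upperTriangularGroup.1 hh i j hij, Matrix.one_apply_ne hij.ne']

end CharTwo

section Wreath

variable {F W R : Type*} [Field F] [AddCommGroup W] [Module F W] [AddCommGroup R] [Module F R]
  (m : ℕ) (B : Subgroup (LinearMap.GeneralLinearGroup F W))

/-- The wreath product `B ≀ S_m` times `GL(R)`, acting on `W^m × R`. -/
def wreathRep :
    ((Fin m → B) ⋊[mulAutArrow (G := Equiv.Perm (Fin m)) (A := Fin m) (M := B)]
      Equiv.Perm (Fin m)) × LinearMap.GeneralLinearGroup F R →*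
      Module.End F ((Fin m → W) × R) where
  toFun x :=
    { toFun := fun v => (fun i => (x.1.left i).1.1 (v.1 (x.1.right⁻¹ i)), x.2.1 v.2)
      map_add' := fun u v => by ext <;> simp
      map_smul' := fun a v => by ext <;> simp }
  map_one' := by ext <;> simp
  map_mul' x y := by
    apply LinearMap.ext
    intro v
    ext <;> simp
    rfl

theorem wreathRep_apply (x) (v : (Fin m → W) × R) :
    wreathRep m B x v =
      (fun i => (x.1.left i).1.1 (v.1 (x.1.right⁻¹ i)), x.2.1 v.2) := rfl

theorem LinearMap.GeneralLinearGroup.val_injective (b : LinearMap.GeneralLinearGroup F W) :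
    Function.Injective b.1 := b.toLinearEquiv.injective

theorem wreathRep_toHomUnits_injective [Nontrivial W] :
    Function.Injective (wreathRep (R := R) m B).toHomUnits := by
  rw [injective_iff_map_eq_one]
  rintro ⟨⟨b, σ⟩, c⟩ h
  have h1 : ∀ v, wreathRep (R := R) m B ⟨⟨b, σ⟩, c⟩ v = v := fun v =>
    congrArg (fun x : LinearMap.GeneralLinearGroup F ((Fin m → W) × R) => x.1 v) h
  simp only [wreathRep_apply, Prod.ext_iff, Prod.forall, funext_iff] at h1
  have hσ : σ = 1 := by
    obtain ⟨w, hw⟩ := exists_ne (0 : W)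
    refine inv_injective (Equiv.ext fun i => ?_)
    by_contra hne
    have := (h1 (Pi.single i w) 0).1 i
    rw [Pi.single_eq_same, Pi.single_eq_of_ne (by simpa using hne), map_zero] at this
    exact hw this.symm
  subst hσ
  have hb : b = 1 := by
    ext i w
    simpa using (h1 (fun _ => w) 0).1 i
  have hc : c = 1 := by
    ext r
    simpa using (h1 0 r).2
  rw [hb, hc]; rfl

theorem card_range_wreathRep [Nontrivial W] :
    Nat.card (wreathRep (R := R) m B).toHomUnits.range =
      Nat.card B ^ m * m.factorial * Nat.card (LinearMap.GeneralLinearGroup F R) := by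
  rw [Nat.card_congr (MonoidHom.ofInjective (wreathRep_toHomUnits_injective m B)).symm.toEquiv,
    Nat.card_prod, SemidirectProduct.card, Nat.card_fun, Nat.card_perm, Nat.card_fin]

end Wreath

section Triangular

variable {F W R : Type*} [Field F] [AddCommGroup W] [Module F W] [AddCommGroup R] [Module F R]

/-- The block upper triangular endomorphism of `W^m × R` with blocks `U` on the diagonal of `W^m`,
`E` above it, `e` in the column of `R`, and the identity on `R`. -/
def upperBlock (m : ℕ) (U E : Module.End F W) (e : R →ₗ[F] W) :
    Module.End F ((Fin m → W) × R) where
  toFun v := (fun i => U (v.1 i) + ∑ j ∈ Finset.Ioi i, E (v.1 j) + e v.2, v.2)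
  map_add' u v := by
    ext
    · simp [Finset.sum_add_distrib]; abel
    · rfl
  map_smul' a v := by ext <;> simp [Finset.smul_sum]

theorem upperBlock_apply (m : ℕ) (U E : Module.End F W) (e : R →ₗ[F] W) (v : (Fin m → W) × R) :
    upperBlock m U E e v =
      (fun i => U (v.1 i) + ∑ j ∈ Finset.Ioi i, E (v.1 j) + e v.2, v.2) := rfl

theorem upperBlock_injective (m : ℕ) {U : Module.End F W} (E : Module.End F W) (e : R →ₗ[F] W)
    (hU : Function.Injective U) : Function.Injective (upperBlock m U E e) := by
  rw [injective_iff_map_eq_zero]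
  rintro ⟨v, r⟩ h
  simp only [upperBlock_apply, Prod.ext_iff, Prod.fst_zero, Prod.snd_zero] at h
  obtain ⟨h, rfl⟩ := h
  have hv : v = 0 := by
    by_contra hv
    obtain ⟨i, hi⟩ := Function.ne_iff.1 hv
    obtain ⟨i, hi, hmax⟩ :=
      WellFounded.has_min (wellFounded_gt (α := Fin m)) {i | v i ≠ 0} ⟨i, hi⟩
    have h1 := congrFun h i
    rw [Finset.sum_eq_zero, map_zero, add_zero, add_zero] at h1
    · exact hi ((map_eq_zero_iff U hU).1 h1)
    · intro j hj
      have : v j = 0 := by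
        by_contra hj'
        exact hmax j hj' (Finset.mem_Ioi.1 hj)
      rw [this, map_zero]
  rw [hv]; rfl

theorem upperBlock_single (m : ℕ) (U E : Module.End F W) (e : R →ₗ[F] W) (i j : Fin m) (w : W) :
    (upperBlock m U E e (Pi.single j w, 0)).1 i =
      if i = j then U w else if i < j then E w else 0 := by
  simp only [upperBlock_apply, map_zero, add_zero]
  rcases lt_trichotomy i j with h | h | h
  · rw [if_neg h.ne, if_pos h, Pi.single_eq_of_ne h.ne, map_zero, zero_add,
      Finset.sum_eq_single j, Pi.single_eq_same]
    · intro k _ hk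
      rw [Pi.single_eq_of_ne hk, map_zero]
    · intro hj
      exact absurd (Finset.mem_Ioi.2 h) hj
  · subst h
    rw [if_pos rfl, Pi.single_eq_same, Finset.sum_eq_zero, add_zero]
    intro k hk
    rw [Pi.single_eq_of_ne (Finset.mem_Ioi.1 hk).ne', map_zero]
  · rw [if_neg h.ne', if_neg h.asymm, Pi.single_eq_of_ne h.ne', map_zero, zero_add,
      Finset.sum_eq_zero]
    intro k hk
    rw [Pi.single_eq_of_ne (h.trans (Finset.mem_Ioi.1 hk)).ne', map_zero]

theorem Equiv.Perm.eq_one_of_le_iff_le {m : ℕ} {σ τ : Equiv.Perm (Fin m)}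
    (h : ∀ i j, σ i ≤ τ j ↔ i ≤ j) : σ = 1 ∧ τ = 1 := by
  have hle : ∀ i, σ i ≤ τ i := fun i => (h i i).2 le_rfl
  have hlt : ∀ i j, i < j → τ i < σ j := fun i j hij =>
    not_le.1 fun h' => absurd ((h j i).1 h') (not_le.2 hij)
  have one_of_strictMono : ∀ ρ : Equiv.Perm (Fin m), StrictMono ρ → ρ = 1 := by
    intro ρ hρ
    have : OrderIso.refl (Fin m) = hρ.orderIsoOfSurjective ρ ρ.surjective := Subsingleton.elim _ _
    ext i
    exact congrArg Fin.val (congrArg (fun f : Fin m ≃o Fin m => f i) this).symm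
  exact ⟨one_of_strictMono σ fun i j hij => (hle i).trans_lt (hlt i j hij),
    one_of_strictMono τ fun i j hij => (hlt i j hij).trans_le (hle j)⟩

/-- If the pair of blocks `U`, `E` is rigid for `B`, then an element of `B ≀ S_m × GL(R)`
carried by `upperBlock m U E e` to a multiple of another one is a scalar. -/
theorem eq_scalar_of_wreathRep_comm [Nontrivial W] {m : ℕ} (hm : 2 ≤ m)
    (B : Subgroup (LinearMap.GeneralLinearGroup F W)) {U E : Module.End F W} {e : R →ₗ[F] W}
    (hU : Function.Injective U) (hE : E ≠ 0) (he : Function.Injective e)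
    (hrow : ∀ b ∈ B, ∀ b' ∈ B, ∀ y ∈ B, ∀ z : F, z ≠ 0 → (∀ w, b.1 (E w) = z • E (y.1 w)) →
      (∀ w, b.1 (U w) = z • U (b'.1 w)) → ∃ a : F, ∀ w, b.1 w = a • w)
    (hcol : ∀ b ∈ B, ∀ b' ∈ B, ∀ y ∈ B, ∀ z : F, z ≠ 0 → (∀ w, y.1 (E w) = z • E (b'.1 w)) →
      (∀ w, b.1 (U w) = z • U (b'.1 w)) → ∃ a : F, ∀ w, b.1 w = a • w)
    (x y) (z : F) (hz : z ≠ 0)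
    (h : ∀ v, wreathRep m B x (upperBlock m U E e v) =
      z • upperBlock m U E e (wreathRep m B y v)) :
    ∃ a : F, ∀ v, wreathRep m B x v = a • v := by
  obtain ⟨⟨b, σ⟩, c⟩ := x
  obtain ⟨⟨b', τ⟩, c'⟩ := y
  set blk : Fin m → Fin m → Module.End F W :=
    fun i j => if i = j then U else if i < j then E else 0 with hblk
  have hblk0 : ∀ i j, blk i j ≠ 0 ↔ i ≤ j := by
    intro i j
    simp only [hblk]
    have hU0 : U ≠ 0 := by
      rintro rfl
      obtain ⟨w, hw⟩ := exists_ne (0 : W)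
      exact hw (hU (by simp))
    split_ifs with h1 h2
    · simp [h1, hU0]
    · simp [h2.le, hE]
    · simpa using lt_of_le_of_ne (not_lt.1 h2) (Ne.symm h1)
  have hub : ∀ i j w, (upperBlock m U E e (Pi.single j w, 0)).1 i = blk i j w := by
    intro i j w
    rw [upperBlock_single]
    simp only [hblk]
    split_ifs <;> rfl
  have hcomm : ∀ i j w, (b i).1.1 (blk (σ⁻¹ i) j w) =
      z • blk i (τ j) ((b' (τ j)).1.1 w) := by
    intro i j w
    have h1 := congrFun (congrArg Prod.fst (h (Pi.single j w, 0))) i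
    have h2 : wreathRep m B ⟨⟨b', τ⟩, c'⟩ ((Pi.single j w, 0) : (Fin m → W) × R) =
        (Pi.single (τ j) ((b' (τ j)).1.1 w), 0) := by
      rw [wreathRep_apply]
      ext k
      · by_cases hk : k = τ j
        · subst hk; simp
        · have : τ⁻¹ k ≠ j := by rintro rfl; simp at hk
          change (b' k).1.1 ((Pi.single j w : Fin m → W) (τ⁻¹ k)) =
            (Pi.single (τ j) ((b' (τ j)).1.1 w) : Fin m → W) k
          rw [Pi.single_eq_of_ne this, Pi.single_eq_of_ne hk, map_zero]
      · simp
    rw [h2, wreathRep_apply, Prod.smul_fst, Pi.smul_apply, hub] at h1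
    rw [← hub]
    exact h1
  have hpat : σ⁻¹ = 1 ∧ τ⁻¹ = 1 := by
    refine Equiv.Perm.eq_one_of_le_iff_le fun i j => ?_
    have hij := hcomm i (τ⁻¹ j)
    rw [show τ (τ⁻¹ j) = j from τ.apply_symm_apply j] at hij
    rw [← hblk0, ← hblk0, not_iff_not]
    constructor
    · intro h0
      ext w
      have := hij ((b' j)⁻¹.1.1 w)
      have hw : (b' j).1.1 ((b' j)⁻¹.1.1 w) = w :=
        congrArg (fun x : B => x.1.1 w) (mul_inv_cancel (b' j))
      rw [h0, hw, LinearMap.zero_apply, map_zero] at this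
      simpa [hz] using this.symm
    · intro h0
      ext w
      have := hij w
      rw [h0, LinearMap.zero_apply, smul_zero] at this
      exact (map_eq_zero_iff _ (LinearMap.GeneralLinearGroup.val_injective _)).1 this
  obtain ⟨hσ, hτ⟩ := hpat
  rw [inv_eq_one] at hσ hτ
  subst hσ hτ
  simp only [inv_one, Equiv.Perm.one_apply] at hcomm
  have hdiag : ∀ i w, (b i).1.1 (U w) = z • U ((b' i).1.1 w) := by
    intro i w
    simpa [hblk] using hcomm i i w
  have habove : ∀ i j, i < j → ∀ w, (b i).1.1 (E w) = z • E ((b' j).1.1 w) := by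
    intro i j hij w
    simpa [hblk, hij, hij.ne] using hcomm i j w
  have hscal : ∀ i, ∃ a : F, ∀ w, (b i).1.1 w = a • w := by
    intro i
    by_cases hi : i.1 = 0
    · have hlt : i < ⟨1, hm⟩ := by simp [Fin.lt_def, hi]
      exact hrow _ (b i).2 _ (b' i).2 _ (b' ⟨1, hm⟩).2 z hz (habove _ _ hlt) (hdiag i)
    · have hlt : (⟨0, by omega⟩ : Fin m) < i := by simpa [Fin.lt_def] using Nat.pos_of_ne_zero hi
      exact hcol _ (b i).2 _ (b' i).2 _ (b _).2 z hz (habove _ _ hlt) (hdiag i)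
  choose a ha using hscal
  have ha' : ∀ i w, z • (b' i).1.1 w = a i • w := by
    intro i w
    apply hU
    rw [map_smul, ← hdiag, ha, map_smul]
  obtain ⟨w₀, hw₀⟩ : ∃ w, E w ≠ 0 := by
    by_contra! hcon
    exact hE (LinearMap.ext hcon)
  have hlt : ∀ i j, i < j → a i = a j := by
    intro i j hij
    have := habove i j hij w₀
    rw [← map_smul, ha', ha, map_smul] at this
    exact smul_left_injective F hw₀ this
  have heq : ∀ i j, a i = a j := by
    intro i j
    rcases lt_trichotomy i j with h1 | h1 | h1
    · exact hlt i j h1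
    · rw [h1]
    · exact (hlt j i h1).symm
  let i₀ : Fin m := ⟨0, by omega⟩
  refine ⟨a i₀, fun v => ?_⟩
  rw [wreathRep_apply]
  refine Prod.ext (funext fun i => ?_) ?_
  · simp [ha, heq i i₀]
  · apply he
    have h1 := h (0, v.2)
    rw [wreathRep_apply, wreathRep_apply] at h1
    have h2 := congrFun (congrArg Prod.fst h1) i₀
    have h3 := congrArg Prod.snd h1
    simp [upperBlock_apply] at h2 h3
    change e (c.1 v.2) = e (a i₀ • v.2)
    rw [map_smul, ← ha, h2, h3, map_smul]

end Triangular

theorem padicValNat_two_pow_sub_one {q k : ℕ} (hq : q % 4 = 1) (hq1 : 1 < q) (hk : k ≠ 0) :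
    padicValNat 2 (q ^ k - 1) = padicValNat 2 (q - 1) + padicValNat 2 k := by
  have : Fact (Nat.Prime 2) := ⟨Nat.prime_two⟩
  have h := Int.two_pow_sub_pow' (x := (q : ℤ)) (y := 1) k (by omega) (by omega)
  have h1 : q ^ k - 1 ≠ 0 := (Nat.sub_pos_of_lt (Nat.one_lt_pow hk hq1)).ne'
  have h2 : q - 1 ≠ 0 := by omega
  have e1 : ((q : ℤ) ^ k - 1 ^ k) = ((q ^ k - 1 : ℕ) : ℤ) := by
    rw [Nat.cast_sub (Nat.one_lt_pow hk hq1).le]; simp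
  have e2 : ((q : ℤ) - 1) = ((q - 1 : ℕ) : ℤ) := by
    rw [Nat.cast_sub hq1.le]; simp
  rw [e1, e2, ← Nat.cast_ofNat (R := ℤ) (n := 2), Int.natCast_emultiplicity,
    Int.natCast_emultiplicity, Int.natCast_emultiplicity, ← padicValNat_eq_emultiplicity h1,
    ← padicValNat_eq_emultiplicity h2, ← padicValNat_eq_emultiplicity hk] at h
  exact_mod_cast h

theorem padicValNat_two_card_GL {F : Type*} [Field F] [Fintype F] (n : ℕ)
    (hF : Odd (Fintype.card F)) :
    padicValNat 2 (Nat.card (GL (Fin n) F)) =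
      ∑ k ∈ Finset.range n, padicValNat 2 (Fintype.card F ^ (k + 1) - 1) := by
  have : Fact (Nat.Prime 2) := ⟨Nat.prime_two⟩
  have hq1 : 1 < Fintype.card F := Fintype.one_lt_card
  have hterm : ∀ i ∈ Finset.range n, Fintype.card F ^ n - Fintype.card F ^ i =
      Fintype.card F ^ i * (Fintype.card F ^ (n - 1 - i + 1) - 1) := by
    intro i hi
    have := Finset.mem_range.1 hi
    rw [Nat.mul_sub, ← pow_add, mul_one]
    congr 2; omega
  have hne : ∀ k, Fintype.card F ^ (k + 1) - 1 ≠ 0 := fun k =>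
    (Nat.sub_pos_of_lt (Nat.one_lt_pow k.succ_ne_zero hq1)).ne'
  rw [Matrix.card_GL_field, ← Finset.prod_range (fun i => Fintype.card F ^ n - Fintype.card F ^ i),
    Finset.prod_congr rfl hterm, Finset.prod_mul_distrib,
    Finset.prod_range_reflect (fun k => Fintype.card F ^ (k + 1) - 1), Finset.prod_pow_eq_pow_sum,
    padicValNat.mul (pow_ne_zero _ (by omega)) (Finset.prod_ne_zero_iff.2 fun k _ => hne k),
    padicValNat.eq_zero_of_not_dvd (hF.pow.not_two_dvd_nat), zero_add]
  clear hterm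
  induction n with
  | zero => simp
  | succ n ih =>
    rw [Finset.prod_range_succ, Finset.sum_range_succ,
      padicValNat.mul (Finset.prod_ne_zero_iff.2 fun k _ => hne k) (hne n), ih]

theorem sum_padicValNat_of_mod_four_eq_one {q : ℕ} (hq : q % 4 = 1) (hq1 : 1 < q) (n : ℕ) :
    ∑ k ∈ Finset.range n, padicValNat 2 (q ^ (k + 1) - 1) =
      padicValNat 2 ((q - 1) ^ n * n.factorial) := by
  have : Fact (Nat.Prime 2) := ⟨Nat.prime_two⟩
  have h0 : q - 1 ≠ 0 := by omega
  induction n with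
  | zero => simp
  | succ n ih =>
    rw [Finset.sum_range_succ, ih, padicValNat_two_pow_sub_one hq hq1 n.succ_ne_zero,
      ← padicValNat.mul h0 n.succ_ne_zero,
      ← padicValNat.mul (mul_ne_zero (pow_ne_zero _ h0) n.factorial_ne_zero)
        (mul_ne_zero h0 n.succ_ne_zero), Nat.factorial_succ]
    congr 1; rw [Nat.succ_eq_add_one]; ring

theorem padicValNat_two_pow_sub_one_of_odd {q k : ℕ} (hq : q % 4 = 3) (hk : Odd k) :
    padicValNat 2 (q ^ k - 1) = 1 := by
  have : Fact (Nat.Prime 2) := ⟨Nat.prime_two⟩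
  obtain ⟨j, rfl⟩ := hk
  have h1 : q ^ (2 * j + 1) % 4 = 3 := by
    rw [pow_succ, pow_mul, Nat.mul_mod, Nat.pow_mod, Nat.pow_mod q 2, hq]
    norm_num
  obtain ⟨c, hc⟩ : ∃ c, q ^ (2 * j + 1) - 1 = 2 * c := ⟨(q ^ (2 * j + 1) - 1) / 2, by omega⟩
  have hc2 : ¬ 2 ∣ c := by omega
  rw [hc, padicValNat.mul two_ne_zero (by rintro rfl; exact hc2 (dvd_zero 2)),
    padicValNat.eq_zero_of_not_dvd hc2]
  simp

theorem sum_padicValNat_of_mod_four_eq_three {q : ℕ} (hq : q % 4 = 3) (m : ℕ) :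
    ∑ k ∈ Finset.range (2 * m), padicValNat 2 (q ^ (k + 1) - 1) =
      padicValNat 2 ((2 * (q ^ 2 - 1)) ^ m * m.factorial) := by
  have : Fact (Nat.Prime 2) := ⟨Nat.prime_two⟩
  have hq2 : 1 < q ^ 2 := Nat.one_lt_pow two_ne_zero (by omega)
  have hq4 : q ^ 2 % 4 = 1 := by rw [Nat.pow_mod, hq]
  have h0 : q ^ 2 - 1 ≠ 0 := by omega
  induction m with
  | zero => simp
  | succ m ih =>
    rw [show 2 * (m + 1) = 2 * m + 1 + 1 by ring, Finset.sum_range_succ, Finset.sum_range_succ, ih,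
      padicValNat_two_pow_sub_one_of_odd hq ⟨m, rfl⟩,
      show q ^ (2 * m + 1 + 1) = (q ^ 2) ^ (m + 1) by ring,
      padicValNat_two_pow_sub_one hq4 hq2 m.succ_ne_zero,
      show (2 * (q ^ 2 - 1)) ^ (m + 1) * (m + 1).factorial =
        (2 * (q ^ 2 - 1)) ^ m * m.factorial * (2 * ((q ^ 2 - 1) * (m + 1))) by
          rw [Nat.factorial_succ]; ring,
      padicValNat.mul (mul_ne_zero (pow_ne_zero _ (by omega)) m.factorial_ne_zero)
        (mul_ne_zero two_ne_zero (mul_ne_zero h0 m.succ_ne_zero)),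
      padicValNat.mul two_ne_zero (mul_ne_zero h0 m.succ_ne_zero),
      padicValNat.mul h0 m.succ_ne_zero, padicValNat.self one_lt_two]
    ring

theorem card_generalLinearGroup_self (F : Type*) [Field F] [Fintype F] :
    Nat.card (LinearMap.GeneralLinearGroup F F) = Fintype.card F - 1 := by
  rw [← Nat.card_congr
    (Matrix.GeneralLinearGroup.toLin' (Module.Basis.singleton (Fin 1) F)).toEquiv,
    Matrix.card_GL_field]
  simp

section Similitude

variable {F : Type*} [Field F]

theorem add_sq_ne_zero_of_not_isSquare_neg_one (hF : ¬ IsSquare (-1 : F)) {x y : F}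
    (h : x ≠ 0 ∨ y ≠ 0) : x ^ 2 + y ^ 2 ≠ 0 := by
  intro h0
  by_cases hx : x = 0
  · subst hx
    exact (h.resolve_left (by simp)) (by simpa using h0)
  · exact hF ⟨y / x, by field_simp; linear_combination -h0⟩

/-- The linear map of `F²` with columns `(x, y)` and `s (-y, x)`. -/
def similitudeMap (x y s : F) : Module.End F (F × F) where
  toFun v := (x * v.1 - s * y * v.2, y * v.1 + s * x * v.2)
  map_add' u v := by ext <;> simp <;> ring
  map_smul' a v := by ext <;> simp <;> ring

theorem similitudeMap_apply (x y s : F) (v : F × F) :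
    similitudeMap x y s v = (x * v.1 - s * y * v.2, y * v.1 + s * x * v.2) := rfl

theorem similitudeMap_inj {x y s x' y' s' : F} (hxy : x ^ 2 + y ^ 2 ≠ 0)
    (h : similitudeMap x y s = similitudeMap x' y' s') : x = x' ∧ y = y' ∧ s = s' := by
  have h1 := LinearMap.congr_fun h (1, 0)
  have h2 := LinearMap.congr_fun h (0, 1)
  simp only [similitudeMap_apply, Prod.ext_iff, mul_one, mul_zero, sub_zero, add_zero, zero_sub,
    zero_add] at h1 h2
  obtain ⟨rfl, rfl⟩ := h1
  refine ⟨rfl, rfl, mul_right_cancel₀ hxy ?_⟩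
  linear_combination x * h2.2 - y * h2.1

theorem similitudeMap_inv_mul {x y s : F} (hxy : x ^ 2 + y ^ 2 ≠ 0) (hs : s ^ 2 = 1) :
    similitudeMap (x / (x ^ 2 + y ^ 2)) (-s * y / (x ^ 2 + y ^ 2)) s * similitudeMap x y s = 1 := by
  refine LinearMap.ext fun v => Prod.ext ?_ ?_
  · simp only [similitudeMap_apply, Module.End.mul_apply, Module.End.one_apply]
    field_simp
    linear_combination (y ^ 2 * v.1 + s * x * y * v.2) * hs
  · simp only [similitudeMap_apply, Module.End.mul_apply, Module.End.one_apply]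
    field_simp
    linear_combination ((x ^ 2 + y ^ 2) * v.2) * hs

theorem isUnit_similitudeMap {x y s : F} (hxy : x ^ 2 + y ^ 2 ≠ 0) (hs : s ^ 2 = 1) :
    IsUnit (similitudeMap x y s) :=
  IsUnit.of_mul_eq_one_right _ (similitudeMap_inv_mul hxy hs)

theorem ne_zero_of_isUnit_similitudeMap {x y s : F} (h : IsUnit (similitudeMap x y s)) :
    x ≠ 0 ∨ y ≠ 0 := by
  by_contra! h0
  obtain ⟨rfl, rfl⟩ := h0
  refine h.ne_zero (LinearMap.ext fun v => ?_)
  simp [similitudeMap_apply]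

/-- The similitude group of the binary form `x² + y²`. -/
def similitudeGroup (hF : ¬ IsSquare (-1 : F)) :
    Subgroup (LinearMap.GeneralLinearGroup F (F × F)) where
  carrier := {b | ∃ x y s : F, s ^ 2 = 1 ∧ b.1 = similitudeMap x y s}
  one_mem' := ⟨1, 0, 1, one_pow 2, by ext <;> simp [similitudeMap_apply]⟩
  mul_mem' := by
    rintro a b ⟨x, y, s, hs, ha⟩ ⟨x', y', s', hs', hb⟩
    refine ⟨x * x' - s * y * y', y * x' + s * x * y', s * s', by rw [mul_pow, hs, hs', one_mul], ?_⟩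
    rw [Units.val_mul, ha, hb]
    refine LinearMap.ext fun v => Prod.ext ?_ ?_
    · simp only [similitudeMap_apply, Module.End.mul_apply]
      linear_combination (s' * x * y' * v.2) * hs
    · simp only [similitudeMap_apply, Module.End.mul_apply]
      linear_combination (s' * y * y' * v.2) * hs
  inv_mem' := by
    rintro b ⟨x, y, s, hs, hb⟩
    have hN : x ^ 2 + y ^ 2 ≠ 0 := add_sq_ne_zero_of_not_isSquare_neg_one hF
      (ne_zero_of_isUnit_similitudeMap (hb ▸ b.isUnit))
    refine ⟨x / (x ^ 2 + y ^ 2), -s * y / (x ^ 2 + y ^ 2), s, hs, ?_⟩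
    exact Units.inv_eq_of_mul_eq_one_left (hb.symm ▸ similitudeMap_inv_mul hN hs)

theorem card_similitudeGroup [Fintype F] (hF : ¬ IsSquare (-1 : F)) :
    Nat.card (similitudeGroup hF) = 2 * (Fintype.card F ^ 2 - 1) := by
  classical
  have h11 : (1 : F) ≠ -1 := fun h => hF ⟨1, by rw [mul_one, ← h]⟩
  have hsq : ∀ s : F, s ^ 2 = 1 ↔ s ∈ ({1, -1} : Finset F) := by
    intro s
    rw [Finset.mem_insert, Finset.mem_singleton, ← one_pow (2 : ℕ), sq_eq_sq_iff_eq_or_eq_neg,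
      one_pow]
  have hne : ∀ p : {p : F × F // p ≠ 0}, p.1.1 ^ 2 + p.1.2 ^ 2 ≠ 0 := by
    rintro ⟨⟨x, y⟩, hp⟩
    refine add_sq_ne_zero_of_not_isSquare_neg_one hF ?_
    by_contra! h0
    exact hp (Prod.ext h0.1 h0.2)
  let f : {s // s ∈ ({1, -1} : Finset F)} × {p : F × F // p ≠ 0} → similitudeGroup hF := fun t =>
    ⟨(isUnit_similitudeMap (hne t.2) ((hsq t.1).2 t.1.2)).unit,
      t.2.1.1, t.2.1.2, t.1, (hsq t.1).2 t.1.2, rfl⟩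
  have hf : Function.Bijective f := by
    constructor
    · rintro ⟨⟨s, hs⟩, p⟩ ⟨⟨s', hs'⟩, p'⟩ h
      obtain ⟨h1, h2, h3⟩ := similitudeMap_inj (hne p)
        (congrArg (fun b : similitudeGroup hF => b.1.1) h)
      exact Prod.ext (Subtype.ext h3) (Subtype.ext (Prod.ext h1 h2))
    · rintro ⟨b, x, y, s, hs, hb⟩
      have hxy := ne_zero_of_isUnit_similitudeMap (hb ▸ b.isUnit)
      refine ⟨⟨⟨s, (hsq s).1 hs⟩, ⟨(x, y), ?_⟩⟩, Subtype.ext (Units.ext hb.symm)⟩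
      intro h0
      rw [Prod.mk_eq_zero] at h0
      exact hxy.elim (fun h => h h0.1) (fun h => h h0.2)
  rw [← Nat.card_congr (Equiv.ofBijective f hf), Nat.card_prod, Nat.card_eq_fintype_card,
    Nat.card_eq_fintype_card, Fintype.card_coe, Finset.card_pair h11]
  have : Fintype.card {p : F × F // p ≠ 0} = Fintype.card F ^ 2 - 1 := by
    rw [Fintype.card_subtype_compl, Fintype.card_prod, Fintype.card_subtype_eq, sq]
  rw [this]

/-- The unipotent map `(v₁, v₂) ↦ (v₁ + v₂, v₂)`. -/
def shear (F : Type*) [Field F] : Module.End F (F × F) where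
  toFun v := (v.1 + v.2, v.2)
  map_add' u v := by ext <;> simp; ring
  map_smul' a v := by ext <;> simp; ring

theorem shear_apply (v : F × F) : shear F v = (v.1 + v.2, v.2) := rfl

theorem eq_scalar_of_shear_comm {x y s x' y' s' z : F} (hz : z ≠ 0)
    (hx : x ≠ 0 ∨ y ≠ 0)
    (hyy : y = 0 ∨ y' = 0)
    (h : ∀ w, similitudeMap x y s (shear F w) = z • shear F (similitudeMap x' y' s' w)) (w : F × F) :
    similitudeMap x y s w = x • w := by
  have h1 := h (1, 0)
  have h2 := h (0, 1)
  simp only [similitudeMap_apply, shear_apply, Prod.smul_mk, Prod.ext_iff, smul_eq_mul, mul_one,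
    mul_zero, sub_zero, add_zero, zero_sub, zero_add] at h1 h2
  have hy' : y' = 0 := by
    rcases hyy with hy | hy
    · have := h1.2
      rw [hy] at this
      simpa [hz] using this.symm
    · exact hy
  have hy : y = 0 := by rw [h1.2, hy', mul_zero]
  subst hy hy'
  have hx0 : x ≠ 0 := by simpa using hx
  have hs : s = 1 := mul_right_cancel₀ hx0 (by linear_combination h2.2 - h2.1)
  ext <;> simp [similitudeMap_apply, hs]

end Similitude

section Main

variable {F : Type*} [Field F] [Fintype F] {n : ℕ}

theorem exists_conj_inf_eq_bot_of_wreath {W R : Type*} [AddCommGroup W] [Module F W]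
    [AddCommGroup R] [Module F R] [FiniteDimensional F W] [FiniteDimensional F R] [Nontrivial W]
    {m : ℕ} (hm : 2 ≤ m) (hn : m * Module.finrank F W + Module.finrank F R = n)
    (B : Subgroup (LinearMap.GeneralLinearGroup F W)) {U E : Module.End F W} {e : R →ₗ[F] W}
    (hcard : padicValNat 2 (Nat.card (GL (Fin n) F)) ≤ padicValNat 2
      (Nat.card B ^ m * m.factorial * Nat.card (LinearMap.GeneralLinearGroup F R)))
    (hU : Function.Injective U) (hE : E ≠ 0) (he : Function.Injective e)
    (hrow : ∀ b ∈ B, ∀ b' ∈ B, ∀ y ∈ B, ∀ z : F, z ≠ 0 → (∀ w, b.1 (E w) = z • E (y.1 w)) →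
      (∀ w, b.1 (U w) = z • U (b'.1 w)) → ∃ a : F, ∀ w, b.1 w = a • w)
    (hcol : ∀ b ∈ B, ∀ b' ∈ B, ∀ y ∈ B, ∀ z : F, z ≠ 0 → (∀ w, y.1 (E w) = z • E (b'.1 w)) →
      (∀ w, b.1 (U w) = z • U (b'.1 w)) → ∃ a : F, ∀ w, b.1 w = a • w)
    (H : Subgroup (GL (Fin n) F ⧸ Subgroup.center (GL (Fin n) F))) (hH : IsPGroup 2 H) :
    ∃ x : GL (Fin n) F ⧸ Subgroup.center (GL (Fin n) F),
      H ⊓ H.map (MulAut.conj x).toMonoidHom = ⊥ := by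
  have : Nonempty (Fin m) := ⟨⟨0, by omega⟩⟩
  have hfin : Module.finrank F ((Fin m → W) × R) = n := by
    rw [Module.finrank_prod, Module.finrank_pi_fintype]
    simpa using hn
  refine Matrix.GeneralLinearGroup.exists_conj_inf_eq_bot (Module.finBasisOfFinrankEq F _ hfin)
    (wreathRep (R := R) m B).toHomUnits.range (by rwa [card_range_wreathRep])
    (LinearMap.GeneralLinearGroup.ofLinearEquiv
      (LinearEquiv.ofInjectiveEndo _ (upperBlock_injective m E e hU))) ?_ H hH
  rintro _ ⟨x, rfl⟩ _ ⟨y, rfl⟩ z hz h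
  exact eq_scalar_of_wreathRep_comm hm B hU hE he hrow hcol x y z hz h

theorem exists_conj_inf_eq_bot_of_mod_four_eq_one (hn : 2 ≤ n) (hF : Fintype.card F % 4 = 1)
    (H : Subgroup (GL (Fin n) F ⧸ Subgroup.center (GL (Fin n) F))) (hH : IsPGroup 2 H) :
    ∃ x : GL (Fin n) F ⧸ Subgroup.center (GL (Fin n) F),
      H ⊓ H.map (MulAut.conj x).toMonoidHom = ⊥ := by
  have hscal : ∀ b : Module.End F F, ∃ a : F, ∀ w, b w = a • w := fun b =>
    ⟨b 1, fun w => by rw [smul_eq_mul, mul_comm, ← smul_eq_mul, ← map_smul, smul_eq_mul, mul_one]⟩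
  refine exists_conj_inf_eq_bot_of_wreath (W := F) (R := PUnit.{1}) hn
    (by simp [Module.finrank_zero_of_subsingleton]) ⊤ (U := 1) (E := 1)
    (e := 0) ?_ Function.injective_id (fun h => one_ne_zero (LinearMap.congr_fun h (1 : F)))
    (Function.injective_of_subsingleton _)
    (fun b _ _ _ _ _ _ _ _ _ => hscal b.1) (fun b _ _ _ _ _ _ _ _ _ => hscal b.1) H hH
  rw [padicValNat_two_card_GL n (Nat.odd_iff.2 (by omega)),
    sum_padicValNat_of_mod_four_eq_one hF Fintype.one_lt_card, Subgroup.card_top,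
    card_generalLinearGroup_self, Nat.card_unique, mul_one]

theorem exists_conj_inf_eq_bot_of_mod_four_eq_three (hn : 4 ≤ n) (hF : Fintype.card F % 4 = 3)
    (H : Subgroup (GL (Fin n) F ⧸ Subgroup.center (GL (Fin n) F))) (hH : IsPGroup 2 H) :
    ∃ x : GL (Fin n) F ⧸ Subgroup.center (GL (Fin n) F),
      H ⊓ H.map (MulAut.conj x).toMonoidHom = ⊥ := by
  have : Fact (Nat.Prime 2) := ⟨Nat.prime_two⟩
  have hsq : ¬ IsSquare (-1 : F) := fun h => FiniteField.isSquare_neg_one_iff.1 h hF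
  have hodd : Odd (Fintype.card F) := Nat.odd_iff.2 (by omega)
  let E : Module.End F (F × F) := LinearMap.inl F F F ∘ₗ LinearMap.fst F F F
  have hE : E ≠ 0 := fun h => by simpa [E] using LinearMap.congr_fun h (1, 0)
  have hU : Function.Injective (shear F) := by
    rw [injective_iff_map_eq_zero]
    rintro ⟨v, w⟩ h
    simp only [shear_apply, Prod.mk_eq_zero] at h
    obtain ⟨h, rfl⟩ := h
    simpa using h
  have hrow : ∀ b ∈ similitudeGroup hsq, ∀ b' ∈ similitudeGroup hsq, ∀ y ∈ similitudeGroup hsq,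
      ∀ z : F, z ≠ 0 → (∀ w, b.1 (E w) = z • E (y.1 w)) →
      (∀ w, b.1 (shear F w) = z • shear F (b'.1 w)) → ∃ a : F, ∀ w, b.1 w = a • w := by
    rintro b ⟨x, y, s, hs, hb⟩ b' ⟨x', y', s', hs', hb'⟩ c - z hz h1 h2
    have h3 := congrArg Prod.snd (h1 (1, 0))
    rw [hb] at h2 h3 ⊢
    rw [hb'] at h2
    have hy : y = 0 := by simpa [E, similitudeMap_apply] using h3
    exact ⟨x, eq_scalar_of_shear_comm hz (ne_zero_of_isUnit_similitudeMap (hb ▸ b.isUnit))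
      (Or.inl hy) h2⟩
  have hcol : ∀ b ∈ similitudeGroup hsq, ∀ b' ∈ similitudeGroup hsq, ∀ y ∈ similitudeGroup hsq,
      ∀ z : F, z ≠ 0 → (∀ w, y.1 (E w) = z • E (b'.1 w)) →
      (∀ w, b.1 (shear F w) = z • shear F (b'.1 w)) → ∃ a : F, ∀ w, b.1 w = a • w := by
    rintro b ⟨x, y, s, hs, hb⟩ b' ⟨x', y', s', hs', hb'⟩ c - z hz h1 h2
    have h3 := congrArg Prod.fst (h1 (0, 1))
    rw [hb'] at h2 h3
    rw [hb] at h2 ⊢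
    have hs0 : s' ≠ 0 := by
      rintro rfl
      simp at hs'
    rw [show E (0, 1) = 0 from rfl, map_zero] at h3
    have hy : y' = 0 := by simpa [E, similitudeMap_apply, hz, hs0] using h3
    exact ⟨x, eq_scalar_of_shear_comm hz (ne_zero_of_isUnit_similitudeMap (hb ▸ b.isUnit))
      (Or.inr hy) h2⟩
  obtain ⟨m, rfl | rfl⟩ := n.even_or_odd'
  · refine exists_conj_inf_eq_bot_of_wreath (R := PUnit.{1}) (m := m) (by omega)
      (by simp [Module.finrank_zero_of_subsingleton]; ring) (similitudeGroup hsq) (e := 0) ?_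
      hU hE (Function.injective_of_subsingleton _) hrow hcol H hH
    rw [padicValNat_two_card_GL _ hodd, sum_padicValNat_of_mod_four_eq_three hF,
      card_similitudeGroup, Nat.card_unique, mul_one]
  · refine exists_conj_inf_eq_bot_of_wreath (R := F) (m := m) (by omega) (by simp; ring)
      (similitudeGroup hsq) (e := LinearMap.inl F F F) ?_ hU hE LinearMap.inl_injective
      hrow hcol H hH
    have hq1 : Fintype.card F - 1 ≠ 0 := by omega
    have hq2 : Fintype.card F ^ 2 - 1 ≠ 0 :=
      (Nat.sub_pos_of_lt (Nat.one_lt_pow two_ne_zero Fintype.one_lt_card)).ne'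
    rw [padicValNat_two_card_GL _ hodd, Finset.sum_range_succ,
      sum_padicValNat_of_mod_four_eq_three hF, card_similitudeGroup, card_generalLinearGroup_self,
      padicValNat.mul (b := Fintype.card F - 1)
        (mul_ne_zero (pow_ne_zero _ (mul_ne_zero two_ne_zero hq2)) m.factorial_ne_zero) hq1,
      padicValNat_two_pow_sub_one_of_odd hF ⟨m, rfl⟩]
    have := padicValNat_two_pow_sub_one_of_odd hF odd_one
    rw [pow_one] at this
    rw [this]

end Main

/-- Let `n ≥ 4` and let `q` be `9`, a Fermat prime, or a Mersenne prime. If `F` is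
the field with `q` elements and `H` is a Sylow `2`-subgroup of
`PGL_n(F) = GL_n(F)/Z(GL_n(F))`, then `H ∩ gHg⁻¹ = 1` for some `g`. -/
theorem stmt12 (n q : ℕ) (hn : 4 ≤ n)
    (hq : q = 9 ∨ (q.Prime ∧ ∃ k : ℕ, q = 2 ^ k + 1) ∨ (q.Prime ∧ ∃ k : ℕ, q = 2 ^ k - 1))
    (F : Type*) [Field F] [Fintype F] (hF : Fintype.card F = q)
    (H : Sylow 2 (Matrix.GeneralLinearGroup (Fin n) F ⧸
      Subgroup.center (Matrix.GeneralLinearGroup (Fin n) F))) :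
    ∃ g : Matrix.GeneralLinearGroup (Fin n) F ⧸
        Subgroup.center (Matrix.GeneralLinearGroup (Fin n) F),
      (H : Subgroup _) ⊓ (H : Subgroup _).map (MulAut.conj g).toMonoidHom = ⊥ := by
  have hH := H.isPGroup'
  by_cases h2 : Fintype.card F = 2
  · exact exists_conj_inf_eq_bot_of_card_eq_two h2 _ hH
  have hodd : q % 2 = 1 := by
    rcases hq with rfl | ⟨hp, -⟩ | ⟨hp, -⟩
    · rfl
    · exact hp.eq_two_or_odd.resolve_left (hF ▸ h2)
    · exact hp.eq_two_or_odd.resolve_left (hF ▸ h2)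
  rcases (by omega : q % 4 = 1 ∨ q % 4 = 3) with h4 | h4
  · exact exists_conj_inf_eq_bot_of_mod_four_eq_one (by omega) (hF ▸ h4) _ hH
  · exact exists_conj_inf_eq_bot_of_mod_four_eq_three hn (hF ▸ h4) _ hH
end
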